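/- arXiv:0909.5199 — 7 statements merged into one kernel-verified Lean document; each statement's English description precedes it below -/
import Mathlib

section
/- For all n ≥ 1 and k ≥ 1, the number of up-down permutations π of [n+1] with extr(π) = k equals the number of up-down permutations π of [n+1] with lrm(π) + st(π) − 2 = k; that is, the statistics extr and lrm + st − 2 are equidistributed on up-down permutations. -/
open Equiv Finset

/-- `π` is an up-down permutation of `[n]` in one-line notation (0-indexed):
`π 0 < π 1 > π 2 < π 3 > ⋯`. -/
def IsUpDownPerm {n : ℕ} (π : Equiv.Perm (Fin n)) : Prop :=
  ∀ i j : Fin n, (j : ℕ) = (i : ℕ) + 1 →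
    (((i : ℕ) % 2 = 0 → π i < π j) ∧ ((i : ℕ) % 2 = 1 → π j < π i))

/-- The Euler number `E n`: the number of up-down permutations of `[n]`. -/
noncomputable def eulerE (n : ℕ) : ℕ :=
  Nat.card {π : Equiv.Perm (Fin n) // IsUpDownPerm π}

/-- The length of the cycle of `π` containing `x` (fixed points give length `1`). -/
noncomputable def cycLen {n : ℕ} (π : Equiv.Perm (Fin n)) (x : Fin n) : ℕ :=
  Function.minimalPeriod (⇑π) x

/-- `x` is the smallest element of its cycle of `π`. -/
def IsOrbitMin {n : ℕ} (π : Equiv.Perm (Fin n)) (x : Fin n) : Prop :=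
  ∀ k : ℕ, x ≤ (π ^ k) x

/-- The cyclic representation `x, π x, π² x, …` (of length `cycLen π x`) of the
cycle of `π` containing `x` has the up-down pattern `x < π x > π² x < ⋯`. -/
def CycleUpDownAt {n : ℕ} (π : Equiv.Perm (Fin n)) (x : Fin n) : Prop :=
  ∀ i : ℕ, i + 1 < cycLen π x →
    ((i % 2 = 0 → (π ^ i) x < (π ^ (i + 1)) x) ∧
     (i % 2 = 1 → (π ^ (i + 1)) x < (π ^ i) x))

/-- `π` is cycle-up-down: every cycle, written in standard form
(starting at its smallest element), is up-down. -/
def IsCUD {n : ℕ} (π : Equiv.Perm (Fin n)) : Prop :=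
  ∀ x : Fin n, IsOrbitMin π x → CycleUpDownAt π x

/-- The number of cycles of `π` (fixed points included), counted via the
smallest elements of the cycles. -/
noncomputable def cycleCount {n : ℕ} (π : Equiv.Perm (Fin n)) : ℕ :=
  Nat.card {x : Fin n // IsOrbitMin π x}

/-- The number of cycles of `π` of even length. -/
noncomputable def evenCycleCount {n : ℕ} (π : Equiv.Perm (Fin n)) : ℕ :=
  Nat.card {x : Fin n // IsOrbitMin π x ∧ Even (cycLen π x)}

/-- The number of cycles of `π` of odd length. -/
noncomputable def oddCycleCount {n : ℕ} (π : Equiv.Perm (Fin n)) : ℕ :=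
  Nat.card {x : Fin n // IsOrbitMin π x ∧ Odd (cycLen π x)}

/-- The number of excedances of `π`. -/
noncomputable def excCount {n : ℕ} (π : Equiv.Perm (Fin n)) : ℕ :=
  Nat.card {i : Fin n // i < π i}

/-- The number of left-to-right minima of `π` (in one-line notation). -/
noncomputable def lrmCount {n : ℕ} (π : Equiv.Perm (Fin n)) : ℕ :=
  Nat.card {i : Fin n // ∀ j : Fin n, j < i → π i < π j}

/-- The number of extreme elements of `π`: entries in position `≥ 2`
(0-indexed: position `≥ 1`) that are left-to-right minima or maxima. -/
noncomputable def extrCount {n : ℕ} (π : Equiv.Perm (Fin n)) : ℕ :=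
  Nat.card {i : Fin n // (i : ℕ) ≠ 0 ∧
    ((∀ j : Fin n, j < i → π i < π j) ∨ (∀ j : Fin n, j < i → π j < π i))}

/-- Auxiliary (fuel-based) computation of the length of the `s`-driven
min/max subsequence of a list: at step `j` (0-indexed) pick the minimum of the
remaining list if `s j = true`, its maximum if `s j = false`, and continue with
the part of the list strictly to the right of the picked entry. -/
def msLenAux : ℕ → (ℕ → Bool) → List ℕ → ℕ
  | 0, _, _ => 0
  | _, _, [] => 0
  | fuel + 1, s, a :: t =>
      let l := a :: t
      let v := if s 0 then l.foldr min a else l.foldr max a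
      1 + msLenAux fuel (fun i => s (i + 1)) ((l.dropWhile (· != v)).tail)

/-- The length of the `s`-driven min/max subsequence of a list
(`s j = true` means minimum at step `j`, `s j = false` means maximum). -/
def msLen (s : ℕ → Bool) (l : List ℕ) : ℕ := msLenAux l.length s l

/-- The one-line notation of `π` as a list of natural numbers. -/
def oneLine {n : ℕ} (π : Equiv.Perm (Fin n)) : List ℕ :=
  List.ofFn fun i => ((π i : ℕ))

/-- The statistic `m_s(π)`: the length of the `s`-driven min/max subsequence
of the one-line notation of `π`. -/
def msStat {n : ℕ} (s : ℕ → Bool) (π : Equiv.Perm (Fin n)) : ℕ :=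
  msLen s (oneLine π)

/-- `st π`: the length of the min-max sequence of `π` (alternately take the
minimum, the maximum, the minimum, … of what remains to the right). -/
def stStat {n : ℕ} (π : Equiv.Perm (Fin n)) : ℕ :=
  msStat (fun i => i % 2 == 0) π

/-- `π` is a cyclic permutation: it consists of a single cycle. -/
def IsCyclicPerm {n : ℕ} (π : Equiv.Perm (Fin n)) : Prop :=
  ∀ x y : Fin n, π.SameCycle x y

/-- The number of up-down cycles of `π` having length `k`. -/
noncomputable def udLenCount {n : ℕ} (π : Equiv.Perm (Fin n)) (k : ℕ) : ℕ :=
  Nat.card {x : Fin n // IsOrbitMin π x ∧ cycLen π x = k ∧ CycleUpDownAt π x}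

/-- `ud π`: the number of up-down cycles of `π`. -/
noncomputable def udCount {n : ℕ} (π : Equiv.Perm (Fin n)) : ℕ :=
  Nat.card {x : Fin n // IsOrbitMin π x ∧ CycleUpDownAt π x}

/-- `r n`: the number of permutations of `[n]` having no up-down cycles. -/
noncomputable def noUDCyclesCount (n : ℕ) : ℕ :=
  Nat.card {π : Equiv.Perm (Fin n) // ∀ x : Fin n, IsOrbitMin π x → ¬ CycleUpDownAt π x}

namespace UD

/-- comparison with direction -/
def ltb (b : Bool) (x y : ℕ) : Prop := if b then x < y else y < x

def alt : Bool → List ℕ → Prop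
  | _, [] => True
  | _, [_] => True
  | b, a :: c :: t => ltb b a c ∧ alt (!b) (c :: t)

lemma alt_cons_ext (b c : Bool) (e : ℕ) (B : List ℕ) (hB : ∀ x ∈ B, ltb c e x)
    (h : B ≠ [] ∨ c = b) : alt b (e :: B) ↔ (c = b ∧ alt (!c) B) := by
  cases B with
  | nil => simp at h; simp [alt, h]
  | cons a t =>
    have := hB a (by simp)
    cases b <;> cases c <;> simp_all [alt, ltb] <;> omega

lemma alt_decomp (c : Bool) (e : ℕ) (B : List ℕ) (hB : ∀ x ∈ B, ltb c e x) :
    ∀ (A : List ℕ) (b : Bool), (∀ x ∈ A, ltb c e x) → (A ≠ [] ∨ c = b) →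
    (alt b (A ++ e :: B) ↔ ((Even A.length ↔ c = b) ∧ alt b A ∧ alt (!c) B))
  | [], b, _, h => by
    simp at h
    simp [alt_cons_ext b c e B hB (Or.inr h), h, alt]
  | [a], b, hA, h => by
    have h1 := hA a (by simp)
    simp only [List.cons_append, List.nil_append, alt]
    by_cases hcb : c = b
    · subst hcb
      have : ¬ ltb c a e := by cases c <;> simp_all [ltb] <;> omega
      simp [this]
    · have hc : c = !b := by cases b <;> cases c <;> simp_all
      rw [alt_cons_ext (!b) c e B hB (Or.inr hc)]
      have : ltb b a e := by subst hc; cases b <;> simp_all [ltb]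
      simp [this, hc]
  | a :: a' :: A', b, hA, h => by
    have ih := alt_decomp c e B hB (a' :: A') (!b) (fun x hx => hA x (by simp_all)) (by simp)
    simp only [List.cons_append, alt] at ih ⊢
    rw [ih]
    have : (Even (a' :: A').length ↔ c = !b) ↔ (Even (a :: a' :: A').length ↔ c = b) := by
      simp only [List.length_cons]
      cases b <;> cases c <;> simp [Nat.even_add_one]
    rw [this]; tauto

/-- lists enumerating a finite set -/
def Ls (S : Finset ℕ) : Finset (List ℕ) := S.val.lists.toFinset

lemma mem_Ls {S : Finset ℕ} {l : List ℕ} : l ∈ Ls S ↔ l.Nodup ∧ l.toFinset = S := by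
  unfold Ls
  rw [Multiset.mem_toFinset, Multiset.mem_lists_iff]
  constructor
  · intro h
    have h2 : S.val = (l : Multiset ℕ) := h
    have hn : l.Nodup := by have := S.nodup; rw [h2] at this; exact this
    refine ⟨hn, ?_⟩
    ext x
    rw [List.mem_toFinset, ← Finset.mem_val, h2]; simp
  · rintro ⟨h, rfl⟩
    simp [List.toFinset_val, List.dedup_eq_self.2 h]

lemma Ls_empty : Ls ∅ = {[]} := by
  ext l; simp only [mem_Ls, List.toFinset_eq_empty_iff, Finset.mem_singleton]
  constructor
  · exact fun h => h.2
  · rintro rfl; simp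

lemma length_Ls {S : Finset ℕ} {l : List ℕ} (h : l ∈ Ls S) : l.length = S.card := by
  obtain ⟨h1, rfl⟩ := mem_Ls.1 h
  exact (List.toFinset_card_of_nodup h1).symm

lemma mem_of_Ls {S : Finset ℕ} {l : List ℕ} (h : l ∈ Ls S) (x : ℕ) : x ∈ l ↔ x ∈ S := by
  obtain ⟨h1, rfl⟩ := mem_Ls.1 h
  simp

lemma sum_Ls {R : Type*} [AddCommMonoid R] (S : Finset ℕ) (e : ℕ) (he : e ∈ S) (F : List ℕ → R) :
    ∑ l ∈ Ls S, F l = ∑ T ∈ (S.erase e).powerset, ∑ A ∈ Ls (S.erase e \ T), ∑ B ∈ Ls T,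
      F (A ++ e :: B) := by
  simp_rw [← Finset.sum_product']
  rw [Finset.sum_sigma']
  symm
  refine Finset.sum_bij (fun p _ => p.2.1 ++ e :: p.2.2) ?_ ?_ ?_ ?_
  · rintro ⟨T, A, B⟩ h
    simp only [Finset.mem_sigma, Finset.mem_product, Finset.mem_powerset] at h
    obtain ⟨hT, hA, hB⟩ := h
    have hA' := mem_of_Ls hA
    have hB' := mem_of_Ls hB
    rw [mem_Ls] at hA hB ⊢
    constructor
    · simp only [List.nodup_append, List.nodup_cons]
      refine ⟨hA.1, ⟨?_, hB.1⟩, ?_⟩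
      · rw [hB']; intro h; have := hT h; simp at this
      · intro a ha b hb
        rw [hA'] at ha
        rw [List.mem_cons, hB'] at hb
        rintro rfl
        simp only [Finset.mem_sdiff, Finset.mem_erase] at ha
        tauto
    · ext x
      simp only [List.mem_toFinset, List.mem_append, List.mem_cons, hA', hB', Finset.mem_sdiff,
        Finset.mem_erase]
      have : x ∈ T → x ∈ S := fun h => Finset.mem_of_mem_erase (hT h)
      by_cases hx : x = e
      · subst hx; simp [he]
      · tauto
  · rintro ⟨T, A, B⟩ h ⟨T', A', B'⟩ h' heq
    simp only [Finset.mem_sigma, Finset.mem_product, Finset.mem_powerset] at h h' heq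
    have h1 : e ∉ A := by rw [mem_of_Ls h.2.1]; simp
    have h2 : e ∉ A' := by rw [mem_of_Ls h'.2.1]; simp
    have key : A = A' ∧ B = B' := by
      clear h h'
      induction A generalizing A' with
      | nil => cases A' with
        | nil => simpa using heq
        | cons a t => simp at heq h2; tauto
      | cons a t ih => cases A' with
        | nil => simp at heq h1; tauto
        | cons a' t' =>
          simp at heq h1 h2
          have := ih t' heq.2 h1.2 h2.2
          simp [this, heq.1]
    obtain ⟨rfl, rfl⟩ := key
    have : T = T' := by rw [← (mem_Ls.1 h.2.2).2, ← (mem_Ls.1 h'.2.2).2]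
    subst this; rfl
  · intro l hl
    have hm : e ∈ l := (mem_of_Ls hl e).2 he
    obtain ⟨A, B, rfl⟩ := List.append_of_mem hm
    have hl' := mem_Ls.1 hl
    have hmem := mem_of_Ls hl
    have hn := hl'.1
    simp only [List.nodup_append, List.nodup_cons] at hn
    simp only [List.mem_append, List.mem_cons] at hmem
    obtain ⟨n1, ⟨n2, n3⟩, n4⟩ := hn
    refine ⟨⟨B.toFinset, A, B⟩, ?_, rfl⟩
    simp only [Finset.mem_sigma, Finset.mem_product, Finset.mem_powerset]
    refine ⟨?_, mem_Ls.2 ⟨n1, ?_⟩, mem_Ls.2 ⟨n3, rfl⟩⟩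
    · intro x hx
      rw [List.mem_toFinset] at hx
      rw [Finset.mem_erase, ← hmem]
      exact ⟨fun h => n2 (h ▸ hx), by tauto⟩
    · ext x
      simp only [List.mem_toFinset, Finset.mem_sdiff, Finset.mem_erase, ← hmem]
      constructor
      · intro hx
        exact ⟨⟨n4 x hx e (by simp), by tauto⟩, fun h => n4 x hx x (by simp [h]) rfl⟩
      · tauto
  · intros; rfl

lemma exists_ext (c : Bool) (S : Finset ℕ) (h : S.Nonempty) :
    ∃ e ∈ S, ∀ x ∈ S.erase e, ltb c e x := by
  cases c
  · refine ⟨S.max' h, S.max'_mem h, fun x hx => ?_⟩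
    simp only [Finset.mem_erase] at hx
    simp only [ltb]
    simpa using lt_of_le_of_ne (S.le_max' x hx.2) hx.1
  · refine ⟨S.min' h, S.min'_mem h, fun x hx => ?_⟩
    simp only [Finset.mem_erase] at hx
    simp only [ltb]
    simpa using lt_of_le_of_ne (S.min'_le x hx.2) (Ne.symm hx.1)

/-! statistics -/

def stL (b : Bool) (l : List ℕ) : ℕ := msLenAux l.length (fun i => (i % 2 == 0) == b) l

lemma fuel_irrel : ∀ (f : ℕ) (s : ℕ → Bool) (l : List ℕ), l.length ≤ f →
    msLenAux f s l = msLenAux l.length s l := by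
  intro f
  induction f using Nat.strong_induction_on with
  | _ f ih =>
  intro s l hl
  cases l with
  | nil => cases f <;> simp [msLenAux]
  | cons a t =>
    cases f with
    | zero => simp at hl
    | succ f =>
      simp only [List.length_cons] at hl ⊢
      simp only [msLenAux]
      generalize hv : (if s 0 = true then List.foldr min a (a :: t) else List.foldr max a (a :: t)) = v
      have hlen : ((List.dropWhile (fun x => x != v) (a :: t)).tail).length ≤ t.length := by
        have := List.length_dropWhile_le (fun x => x != v) (a :: t)
        simp only [List.length_tail, List.length_cons] at this ⊢
        omega
      rw [ih f (by omega) _ _ (by omega)]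
      rcases Nat.lt_or_ge t.length (f+1) with h | h
      · rw [ih t.length (by omega) _ _ hlen]
      · omega

lemma foldr_min_eq (e : ℕ) : ∀ (l : List ℕ) (a : ℕ), (∀ x ∈ l, e ≤ x) → e ≤ a → (e ∈ l ∨ e = a) →
    l.foldr min a = e
  | [], a, _, _, h => by simp at h; simp [h]
  | x :: t, a, hl, ha, h => by
    simp only [List.foldr_cons]
    have h1 : e ≤ x := hl x (by simp)
    have h3 : e ≤ t.foldr min a := by
      have : ∀ y ∈ t, e ≤ y := fun y hy => hl y (by simp [hy])
      clear h hl
      induction t with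
      | nil => simpa
      | cons y t ih => simp_all
    by_cases hx : e = x
    · omega
    · have := foldr_min_eq e t a (fun y hy => hl y (by simp [hy])) ha (by simp_all)
      omega

lemma foldr_max_eq (e : ℕ) : ∀ (l : List ℕ) (a : ℕ), (∀ x ∈ l, x ≤ e) → a ≤ e → (e ∈ l ∨ e = a) →
    l.foldr max a = e
  | [], a, _, _, h => by simp at h; simp [h]
  | x :: t, a, hl, ha, h => by
    simp only [List.foldr_cons]
    have h1 : x ≤ e := hl x (by simp)
    have h3 : t.foldr max a ≤ e := by
      have : ∀ y ∈ t, y ≤ e := fun y hy => hl y (by simp [hy])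
      clear h hl
      induction t with
      | nil => simpa
      | cons y t ih => simp_all
    by_cases hx : e = x
    · omega
    · have := foldr_max_eq e t a (fun y hy => hl y (by simp [hy])) ha (by simp_all)
      omega

lemma stL_decomp (b : Bool) (e : ℕ) (A B : List ℕ) (hA : ∀ x ∈ A, ltb b e x)
    (hB : ∀ x ∈ B, ltb b e x) : stL b (A ++ e :: B) = 1 + stL (!b) B := by
  have hl : ∃ a t, A ++ e :: B = a :: t := by
    cases A with
    | nil => exact ⟨_, _, rfl⟩
    | cons a t => exact ⟨_, _, rfl⟩
  obtain ⟨a, t, hat⟩ := hl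
  have hlen : t.length = A.length + B.length := by
    have := congrArg List.length hat
    simp at this; omega
  have hmem : ∀ x ∈ a :: t, x = e ∨ ltb b e x := by
    rw [← hat]; intro x hx
    simp only [List.mem_append, List.mem_cons] at hx
    rcases hx with h | h | h
    · exact Or.inr (hA x h)
    · exact Or.inl h
    · exact Or.inr (hB x h)
  have he : e ∈ a :: t := by rw [← hat]; simp
  have hv : (if b = true then List.foldr min a (a :: t) else List.foldr max a (a :: t)) = e := by
    cases b
    · simp only [Bool.false_eq_true, if_false]
      apply foldr_max_eq e _ _ _ _ (Or.inl he)
      · intro x hx; have := hmem x hx; simp [ltb] at this; omega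
      · have := hmem a (by simp); simp [ltb] at this; omega
    · simp only [if_true]
      apply foldr_min_eq e _ _ _ _ (Or.inl he)
      · intro x hx; have := hmem x hx; simp [ltb] at this; omega
      · have := hmem a (by simp); simp [ltb] at this; omega
  have hne : ∀ x ∈ A, (x != e) = true := by
    intro x hx; have h1 := hA x hx
    have : x ≠ e := by cases b <;> simp [ltb] at h1 <;> omega
    simpa using this
  have hd : ((a :: t).dropWhile (fun x => x != e)).tail = B := by
    rw [← hat, List.dropWhile_append_of_pos hne]; simp
  have hs : (fun i => ((i + 1) % 2 == 0) == b) = (fun i => (i % 2 == 0) == !b) := by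
    funext i
    rcases Nat.mod_two_eq_zero_or_one i with h | h
    · have h2 : (i + 1) % 2 = 1 := by omega
      cases b <;> simp [h, h2]
    · have h2 : (i + 1) % 2 = 0 := by omega
      cases b <;> simp [h, h2]
  unfold stL
  rw [hat]
  simp only [List.length_cons, msLenAux]
  rw [show ((0 % 2 == 0) == b) = b by simp, hv, hd, hs, fuel_irrel _ _ _ (by omega)]

def rlrm : List ℕ → ℕ
  | [] => 0
  | a :: t => rlrm t + (open Classical in if ∀ x ∈ t, a < x then 1 else 0)

def rext : List ℕ → ℕ
  | [] => 0
  | a :: t => rext t + (open Classical in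
      if t ≠ [] ∧ ((∀ x ∈ t, a < x) ∨ (∀ x ∈ t, x < a)) then 1 else 0)

def lrmL (l : List ℕ) : ℕ := rlrm l.reverse
def extL (l : List ℕ) : ℕ := rext l.reverse

lemma lrmL_decomp (e : ℕ) (A B : List ℕ) (hA : ∀ x ∈ A, ltb true e x)
    (hB : ∀ x ∈ B, ltb true e x) : lrmL (A ++ e :: B) = lrmL A + 1 := by
  unfold lrmL
  simp only [List.reverse_append, List.reverse_cons, List.append_assoc, List.cons_append,
    List.nil_append]
  have hB' : ∀ x ∈ B.reverse, e < x := by intro x hx; simpa [ltb] using hB x (by simpa using hx)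
  have hA' : ∀ x ∈ A.reverse, e < x := by intro x hx; simpa [ltb] using hA x (by simpa using hx)
  generalize B.reverse = B' at *
  generalize A.reverse = A' at *
  induction B' with
  | nil => simp [rlrm]; exact hA'
  | cons y t ih =>
    simp only [List.cons_append, rlrm]
    rw [ih (fun x hx => hB' x (by simp [hx]))]
    have h1 := hB' y (by simp)
    rw [if_neg]
    intro h
    have := h e (by simp)
    omega

lemma extL_decomp (c : Bool) (e e' : ℕ) (A B : List ℕ) (hA : ∀ x ∈ A, ltb c e x) (he' : e' ∈ A)
    (hB : ∀ x ∈ B, ltb c e x) (hB' : ∀ x ∈ B, ltb (!c) e' x) : extL (A ++ e :: B) = extL A + 1 := by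
  unfold extL
  simp only [List.reverse_append, List.reverse_cons, List.append_assoc, List.cons_append,
    List.nil_append]
  replace hB : ∀ x ∈ B.reverse, ltb c e x := by intro x hx; exact hB x (by simpa using hx)
  replace hB' : ∀ x ∈ B.reverse, ltb (!c) e' x := by intro x hx; exact hB' x (by simpa using hx)
  replace hA : ∀ x ∈ A.reverse, ltb c e x := by intro x hx; exact hA x (by simpa using hx)
  replace he' : e' ∈ A.reverse := by simpa
  generalize B.reverse = B' at *
  generalize A.reverse = A' at *
  induction B' with
  | nil =>
    simp only [List.nil_append, rext]
    rw [if_pos]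
    refine ⟨by rintro rfl; simp at he', ?_⟩
    cases c <;> simp_all [ltb]
  | cons y t ih =>
    simp only [List.cons_append, rext]
    rw [ih (fun x hx => hB x (by simp [hx])) (fun x hx => hB' x (by simp [hx]))]
    have h1 := hB y (by simp)
    have h2 := hB' y (by simp)
    rw [if_neg]
    rintro ⟨-, h | h⟩
    · have a1 := h e (by simp)
      have a2 := h e' (by simp [he'])
      cases c <;> simp [ltb] at h1 h2 <;> omega
    · have a1 := h e (by simp)
      have a2 := h e' (by simp [he'])
      cases c <;> simp [ltb] at h1 h2 <;> omega

section sums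
variable {R : Type*} [CommRing R]
open Classical

noncomputable def Wt (t : R) (b : Bool) (S : Finset ℕ) : R :=
  ∑ l ∈ Ls S, if alt b l then t ^ stL b l else 0
noncomputable def Lt (t : R) (S : Finset ℕ) : R :=
  ∑ l ∈ Ls S, if Even l.length ∧ alt true l then t ^ lrmL l else 0
noncomputable def Xt (t : R) (S : Finset ℕ) : R :=
  ∑ l ∈ Ls S, if alt true l then t ^ extL l else 0
noncomputable def Yt (t : R) (S : Finset ℕ) : R :=
  ∑ l ∈ Ls S, if alt true l then t ^ (lrmL l + stL true l) else 0

lemma sum_Ls' (S : Finset ℕ) (e : ℕ) (he : e ∈ S) (F G H : List ℕ → R)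
    (h : ∀ A B, (∀ x ∈ A, x ∈ S.erase e) → (∀ x ∈ B, x ∈ S.erase e) → (∀ x ∈ A, x ∉ B) →
      F (A ++ e :: B) = G B * H A) :
    ∑ l ∈ Ls S, F l = ∑ T ∈ (S.erase e).powerset,
      (∑ B ∈ Ls T, G B) * (∑ A ∈ Ls (S.erase e \ T), H A) := by
  rw [sum_Ls S e he]
  refine Finset.sum_congr rfl fun T hT => ?_
  rw [Finset.mem_powerset] at hT
  rw [Finset.sum_mul_sum, Finset.sum_comm]
  refine Finset.sum_congr rfl fun B hB => Finset.sum_congr rfl fun A hA => ?_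
  have hA' := mem_of_Ls hA
  have hB' := mem_of_Ls hB
  apply h
  · intro x hx; rw [hA', Finset.mem_sdiff] at hx; exact hx.1
  · intro x hx; rw [hB'] at hx; exact hT hx
  · intro x hx; rw [hA', Finset.mem_sdiff] at hx; rw [hB']; exact hx.2

lemma Wt_rec (t : R) (b : Bool) (S : Finset ℕ) (e : ℕ) (he : e ∈ S)
    (hx : ∀ x ∈ S.erase e, ltb b e x) :
    Wt t b S = ∑ T ∈ (S.erase e).powerset, Wt t (!b) T *
      (if Even (S.erase e \ T).card then t * Wt 1 b (S.erase e \ T) else 0) := by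
  unfold Wt
  rw [sum_Ls' S e he _ (fun B => if alt (!b) B then t ^ stL (!b) B else 0)
    (fun A => if Even A.length ∧ alt b A then t else 0)]
  · refine Finset.sum_congr rfl fun T hT => ?_
    congr 1
    split_ifs with hE
    · rw [Finset.mul_sum]
      refine Finset.sum_congr rfl fun A hA => ?_
      simp [length_Ls hA, hE]
    · refine Finset.sum_eq_zero fun A hA => ?_
      simp [length_Ls hA, hE]
  · intro A B hA hB _
    have hA' := fun x h => hx x (hA x h)
    have hB' := fun x h => hx x (hB x h)
    rw [stL_decomp b e A B hA' hB']
    have := alt_decomp b e B hB' A b hA' (Or.inr rfl)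
    simp only [iff_true] at this
    simp only [this]
    by_cases h1 : Even A.length <;> by_cases h2 : alt b A <;> by_cases h3 : alt (!b) B <;>
      simp [h1, h2, h3]
    ring

lemma Lt_rec (t : R) (S : Finset ℕ) (e : ℕ) (he : e ∈ S)
    (hx : ∀ x ∈ S.erase e, ltb true e x) :
    Lt t S = ∑ T ∈ (S.erase e).powerset, (if Odd T.card then t * Wt 1 false T else 0) *
      Lt t (S.erase e \ T) := by
  unfold Lt Wt
  rw [sum_Ls' S e he _ (fun B => if Odd B.length ∧ alt false B then t else 0)
    (fun A => if Even A.length ∧ alt true A then t ^ lrmL A else 0)]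
  · refine Finset.sum_congr rfl fun T hT => ?_
    congr 1
    split_ifs with hE
    · rw [Finset.mul_sum]
      refine Finset.sum_congr rfl fun A hA => ?_
      simp [length_Ls hA, hE]
    · refine Finset.sum_eq_zero fun A hA => ?_
      simp only [length_Ls hA, hE, false_and, if_false]
  · intro A B hA hB _
    have hA' := fun x h => hx x (hA x h)
    have hB' := fun x h => hx x (hB x h)
    rw [lrmL_decomp e A B hA' hB']
    have := alt_decomp true e B hB' A true hA' (Or.inr rfl)
    simp only [iff_true, Bool.not_true] at this
    simp only [this]
    have hl : (A ++ e :: B).length = A.length + (B.length + 1) := by simp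
    rw [hl]
    by_cases h1 : Even A.length
    · have hp : Even (A.length + (B.length + 1)) ↔ Odd B.length := by
        rw [Nat.even_add, Nat.even_add_one, Nat.not_even_iff_odd]; simp [h1]
      simp only [hp]
      by_cases h2 : alt true A <;> by_cases h3 : alt false B <;>
        by_cases h4 : Odd B.length <;> simp [h1, h2, h3, h4]
      ring
    · simp [h1]

lemma Yt_rec (t : R) (S : Finset ℕ) (e : ℕ) (he : e ∈ S)
    (hx : ∀ x ∈ S.erase e, ltb true e x) :
    Yt t S = ∑ T ∈ (S.erase e).powerset, (t ^ 2 * Wt t false T) * Lt t (S.erase e \ T) := by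
  unfold Lt Wt Yt
  rw [sum_Ls' S e he _ (fun B => t ^ 2 * if alt false B then t ^ stL false B else 0)
    (fun A => if Even A.length ∧ alt true A then t ^ lrmL A else 0)]
  · simp_rw [Finset.mul_sum]
  · intro A B hA hB _
    have hA' := fun x h => hx x (hA x h)
    have hB' := fun x h => hx x (hB x h)
    rw [lrmL_decomp e A B hA' hB', stL_decomp true e A B hA' hB']
    have := alt_decomp true e B hB' A true hA' (Or.inr rfl)
    simp only [iff_true, Bool.not_true] at this
    simp only [this]
    by_cases h1 : Even A.length <;> by_cases h2 : alt true A <;> by_cases h3 : alt false B <;>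
      simp [h1, h2, h3]
    ring

lemma Xt_half (t : R) (c : Bool) (S : Finset ℕ) (e e' : ℕ) (he : e ∈ S) (he'S : e' ∈ S) (hne : e ≠ e')
    (hx : ∀ x ∈ S.erase e, ltb c e x) (hx' : ∀ x ∈ S.erase e', ltb (!c) e' x) :
    (∑ l ∈ Ls S, if l.idxOf e' < l.idxOf e then (if alt true l then t ^ extL l else 0) else 0) =
    ∑ T ∈ ((S.erase e).erase e').powerset, Wt 1 (!c) T *
      (if (Even (S.erase e \ T).card ↔ c = true) then t * Xt t (S.erase e \ T) else 0) := by
  rw [sum_Ls' S e he _ (fun B => if alt (!c) B then 1 else 0)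
    (fun A => if e' ∈ A ∧ (Even A.length ↔ c = true) ∧ alt true A then t * t ^ extL A else 0)]
  · symm
    have hsub : ((S.erase e).erase e').powerset ⊆ (S.erase e).powerset :=
      Finset.powerset_mono.2 (Finset.erase_subset _ _)
    refine Eq.trans ?_ (Finset.sum_subset hsub ?_)
    · refine Finset.sum_congr rfl fun T hT => ?_
      rw [Finset.mem_powerset] at hT
      · have hT' : e' ∈ S.erase e \ T := by
          simp only [Finset.mem_sdiff, Finset.mem_erase]
          refine ⟨⟨hne.symm, he'S⟩, fun h => ?_⟩
          have := hT h; simp at this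
        congr 1
        · unfold Wt; simp
        · unfold Xt
          split_ifs with hE
          · rw [Finset.mul_sum]
            refine Finset.sum_congr rfl fun A hA => ?_
            simp [length_Ls hA, mem_of_Ls hA, hT', hE]
          · symm
            refine Finset.sum_eq_zero fun A hA => ?_
            simp only [length_Ls hA, hE, false_and, and_false, if_false]
    · intro T hT hT2
      rw [Finset.mem_powerset] at hT hT2
      have : e' ∈ T := by
        by_contra h
        exact hT2 (Finset.subset_erase.2 ⟨hT, h⟩)
      apply mul_eq_zero_of_right
      refine Finset.sum_eq_zero fun A hA => ?_
      simp [mem_of_Ls hA, this]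
  · intro A B hA hB hAB
    have hA' := fun x h => hx x (hA x h)
    have hB' := fun x h => hx x (hB x h)
    have heA : e ∉ A := fun h => by simpa using hA e h
    have hidx : (A ++ e :: B).idxOf e = A.length := by
      rw [List.idxOf_append_of_notMem heA]; simp
    have hidx' : (A ++ e :: B).idxOf e' < A.length ↔ e' ∈ A := by
      by_cases h : e' ∈ A
      · rw [List.idxOf_append_of_mem h]; simp [h, List.idxOf_lt_length_iff]
      · rw [List.idxOf_append_of_notMem h]; simp [h]
    rw [hidx]
    simp only [hidx']
    by_cases h : e' ∈ A
    · have hB'' : ∀ x ∈ B, ltb (!c) e' x := by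
        intro x hxB
        apply hx'
        rw [Finset.mem_erase]
        refine ⟨?_, Finset.mem_of_mem_erase (hB x hxB)⟩
        rintro rfl; exact hAB _ h hxB
      rw [extL_decomp c e e' A B hA' h hB' hB'']
      have := alt_decomp c e B hB' A true hA' (Or.inl (by rintro rfl; simp at h))
      simp only [this, h, true_and, if_true]
      by_cases h1 : (Even A.length ↔ c = true) <;> by_cases h2 : alt true A <;>
        by_cases h3 : alt (!c) B <;> simp [h1, h2, h3]
      ring
    · simp [h]

lemma Xt_rec (t : R) (S : Finset ℕ) (m M : ℕ) (hm : m ∈ S) (hM : M ∈ S) (hne : m ≠ M)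
    (hx : ∀ x ∈ S.erase m, ltb true m x) (hx' : ∀ x ∈ S.erase M, ltb false M x) :
    Xt t S = (∑ T ∈ ((S.erase m).erase M).powerset, Wt 1 false T *
      (if Even (S.erase m \ T).card then t * Xt t (S.erase m \ T) else 0)) +
      (∑ T ∈ ((S.erase m).erase M).powerset, Wt 1 true T *
      (if Even (S.erase M \ T).card then 0 else t * Xt t (S.erase M \ T))) := by
  have h1 := Xt_half t true S m M hm hM hne hx hx'
  have h2 := Xt_half t false S M m hM hm hne.symm hx' hx
  rw [Finset.erase_right_comm] at h2
  simp only [iff_true, Bool.not_true, Bool.not_false, Bool.false_eq_true, iff_false, ite_not] at h1 h2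
  rw [← h1, ← h2, ← Finset.sum_add_distrib]
  unfold Xt
  refine Finset.sum_congr rfl fun l hl => ?_
  have a1 := (mem_of_Ls hl m).2 hm
  have : l.idxOf m ≠ l.idxOf M := fun h => hne ((List.idxOf_inj a1).1 h)
  rcases lt_or_gt_of_ne this with h | h
  · rw [if_neg (not_lt.2 h.le), if_pos h, zero_add]
  · rw [if_pos h, if_neg (not_lt.2 h.le), add_zero]

def conv (f g : ℕ → R) (n : ℕ) : R := ∑ k ∈ Finset.range (n + 1), n.choose k • (f k * g (n - k))

lemma sum_conv (f g : ℕ → R) (S : Finset ℕ) :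
    ∑ T ∈ S.powerset, f T.card * g (S \ T).card = conv f g S.card := by
  unfold conv
  rw [← Finset.sum_powerset_apply_card (fun k => f k * g (S.card - k))]
  refine Finset.sum_congr rfl fun T hT => ?_
  rw [Finset.card_sdiff_of_subset (Finset.mem_powerset.1 hT)]

lemma stL_nil (b : Bool) : stL b [] = 0 := rfl

lemma Wt_empty (t : R) (b : Bool) : Wt t b ∅ = 1 := by
  simp [Wt, Ls_empty, alt, stL_nil]
lemma Lt_empty (t : R) : Lt t ∅ = 1 := by
  simp [Lt, Ls_empty, alt, lrmL, rlrm]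
lemma Xt_single (t : R) (a : ℕ) : Xt t {a} = 1 := by
  unfold Xt
  rw [sum_Ls {a} a (by simp)]
  simp [Ls_empty, alt, extL, rext]

noncomputable def w (t : R) (n : ℕ) : R := Wt t true (Finset.range n)
noncomputable def lq (t : R) (n : ℕ) : R := Lt t (Finset.range n)
noncomputable def xq (t : R) (n : ℕ) : R := Xt t (Finset.range (n + 1))

noncomputable def ev (f : ℕ → R) (n : ℕ) : R := if Even n then f n else 0
noncomputable def od (f : ℕ → R) (n : ℕ) : R := if Odd n then f n else 0

lemma Wt_card (t : R) : ∀ (n : ℕ) (b : Bool) (S : Finset ℕ), S.card = n →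
    (Wt t b S = w t n ∧ Wt 1 b S = w (1 : R) n) := by
  intro n
  induction n using Nat.strong_induction_on with
  | _ n ih =>
  cases n with
  | zero =>
    intro b S hS
    rw [Finset.card_eq_zero] at hS
    subst hS
    simp [w, Wt_empty]
  | succ n =>
    have key : ∀ (s : R), (∀ m < n + 1, ∀ (b : Bool) (S : Finset ℕ), S.card = m →
        Wt s b S = w s m ∧ Wt 1 b S = w (1 : R) m) →
        ∀ (b : Bool) (S : Finset ℕ), S.card = n + 1 →
        Wt s b S = conv (w s) (ev fun m => s * w 1 m) n := by
      intro s ih b S hS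
      obtain ⟨e, he, hx⟩ := exists_ext b S (Finset.card_pos.1 (by omega))
      have hc : (S.erase e).card = n := by rw [Finset.card_erase_of_mem he]; omega
      rw [Wt_rec s b S e he hx, ← hc, ← sum_conv]
      refine Finset.sum_congr rfl fun T hT => ?_
      rw [Finset.mem_powerset] at hT
      have h1 := Finset.card_le_card hT
      have h2 := Finset.card_le_card (Finset.sdiff_subset (s := S.erase e) (t := T))
      rw [(ih T.card (by omega) (!b) T rfl).1, (ih _ (by omega) b (S.erase e \ T) rfl).2]
      rfl
    intro b S hS
    have k1 := key t ih
    have k2 := key 1 (fun m hm b S hS => ⟨(ih m hm b S hS).2, (ih m hm b S hS).2⟩)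
    exact ⟨(k1 b S hS).trans (k1 true (Finset.range (n+1)) (by simp)).symm,
      (k2 b S hS).trans (k2 true (Finset.range (n+1)) (by simp)).symm⟩

lemma w_rec (t : R) (n : ℕ) : w t (n + 1) = conv (w t) (ev fun m => t * w 1 m) n := by
  obtain ⟨e, he, hx⟩ := exists_ext true (Finset.range (n+1)) (by simp)
  have hc : ((Finset.range (n+1)).erase e).card = n := by rw [Finset.card_erase_of_mem he]; simp
  conv_rhs => rw [← hc, ← sum_conv]
  rw [w, Wt_rec t true _ e he hx]
  refine Finset.sum_congr rfl fun T hT => ?_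
  rw [(Wt_card t _ _ T rfl).1, (Wt_card t _ _ (_ \ T) rfl).2]
  rfl

lemma Lt_conv (t : R) (n : ℕ) (h : ∀ (S : Finset ℕ), S.card ≤ n → Lt t S = lq t S.card)
    (S : Finset ℕ) (hS : S.card = n + 1) : Lt t S = conv (od fun m => t * w 1 m) (lq t) n := by
  obtain ⟨e, he, hx⟩ := exists_ext true S (Finset.card_pos.1 (by omega))
  have hc : (S.erase e).card = n := by rw [Finset.card_erase_of_mem he]; omega
  rw [Lt_rec t S e he hx, ← hc, ← sum_conv]
  refine Finset.sum_congr rfl fun T hT => ?_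
  have h2 := Finset.card_le_card (Finset.sdiff_subset (s := S.erase e) (t := T))
  rw [h _ (by omega), (Wt_card t _ _ T rfl).2]
  rfl

lemma Lt_card (t : R) : ∀ (n : ℕ) (S : Finset ℕ), S.card ≤ n → Lt t S = lq t S.card := by
  intro n
  induction n with
  | zero =>
    intro S hS
    have : S = ∅ := by rw [← Finset.card_eq_zero]; omega
    subst this; simp [lq]
  | succ n ih =>
    intro S hS
    rcases Nat.lt_or_ge S.card (n+1) with h | h
    · exact ih S (by omega)
    · have h' : S.card = n + 1 := by omega
      rw [Lt_conv t n ih S h', h', lq, Lt_conv t n ih _ (by simp)]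

lemma lq_rec (t : R) (n : ℕ) : lq t (n + 1) = conv (od fun m => t * w 1 m) (lq t) n :=
  Lt_conv t n (Lt_card t n) _ (by simp)

lemma Yt_eq (t : R) (n : ℕ) : Yt t (Finset.range (n + 1)) = t ^ 2 * conv (w t) (lq t) n := by
  obtain ⟨e, he, hx⟩ := exists_ext true (Finset.range (n+1)) (by simp)
  have hc : ((Finset.range (n+1)).erase e).card = n := by rw [Finset.card_erase_of_mem he]; simp
  conv_rhs => rw [← hc, ← sum_conv]
  rw [Yt_rec t _ e he hx, Finset.mul_sum]
  refine Finset.sum_congr rfl fun T hT => ?_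
  rw [(Wt_card t _ _ T rfl).1, Lt_card t _ _ le_rfl, mul_assoc]

lemma Xt_conv (t : R) (n : ℕ)
    (h : ∀ (S : Finset ℕ), S.card ≤ n + 1 → S.card ≠ 0 → Xt t S = xq t (S.card - 1))
    (S : Finset ℕ) (hS : S.card = n + 2) : Xt t S = conv (fun m => t * w 1 m) (xq t) n := by
  obtain ⟨m, hm, hx⟩ := exists_ext true S (Finset.card_pos.1 (by omega))
  obtain ⟨M, hM, hx'⟩ := exists_ext false S (Finset.card_pos.1 (by omega))
  have hne : m ≠ M := by
    rintro rfl
    obtain ⟨x, hxx⟩ := Finset.card_pos.1 (show 0 < (S.erase m).card by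
      rw [Finset.card_erase_of_mem hm]; omega)
    have a1 := hx x hxx
    have a2 := hx' x hxx
    simp [ltb] at a1 a2; omega
  have c1 : (S.erase m).card = n + 1 := by rw [Finset.card_erase_of_mem hm]; omega
  have c2 : (S.erase M).card = n + 1 := by rw [Finset.card_erase_of_mem hM]; omega
  have hMm : M ∈ S.erase m := Finset.mem_erase.2 ⟨hne.symm, hM⟩
  have c3 : ((S.erase m).erase M).card = n := by rw [Finset.card_erase_of_mem hMm]; omega
  rw [Xt_rec t S m M hm hM hne hx hx', ← Finset.sum_add_distrib, ← c3, ← sum_conv]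
  refine Finset.sum_congr rfl fun T hT => ?_
  rw [Finset.mem_powerset] at hT
  have s1 : T ⊆ S.erase m := hT.trans (Finset.erase_subset _ _)
  have s2 : T ⊆ S.erase M := by
    rw [Finset.erase_right_comm] at hT; exact hT.trans (Finset.erase_subset _ _)
  have hT' := Finset.card_le_card hT
  have d1 : (S.erase m \ T).card = n + 1 - T.card := by rw [Finset.card_sdiff_of_subset s1, c1]
  have d2 : (S.erase M \ T).card = n + 1 - T.card := by rw [Finset.card_sdiff_of_subset s2, c2]
  have d3 : ((S.erase m).erase M \ T).card = n - T.card := by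
    rw [Finset.card_sdiff_of_subset hT, c3]
  rw [h _ (by omega) (by omega), h _ (by omega) (by omega), d1, d2, d3,
    (Wt_card t _ _ T rfl).2, (Wt_card t _ _ T rfl).2]
  have : n + 1 - T.card - 1 = n - T.card := by omega
  rw [this]
  split_ifs <;> ring

lemma Xt_card (t : R) : ∀ (n : ℕ) (S : Finset ℕ), S.card ≤ n + 1 → S.card ≠ 0 →
    Xt t S = xq t (S.card - 1) := by
  intro n
  induction n with
  | zero =>
    intro S hS h0
    have : S.card = 1 := by omega
    obtain ⟨a, rfl⟩ := Finset.card_eq_one.1 this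
    simp [xq, Xt_single]
  | succ n ih =>
    intro S hS h0
    rcases Nat.lt_or_ge S.card (n+2) with h | h
    · exact ih S (by omega) h0
    · have h' : S.card = n + 2 := by omega
      rw [Xt_conv t n ih S h', h', show n + 2 - 1 = n + 1 by omega, xq,
        Xt_conv t n ih _ (by simp)]

lemma xq_rec (t : R) (n : ℕ) : xq t (n + 1) = conv (fun m => t * w 1 m) (xq t) n :=
  Xt_conv t n (Xt_card t n) _ (by simp)

noncomputable def egf [Algebra ℚ R] (f : ℕ → R) : PowerSeries R :=
  PowerSeries.mk fun n => ((n.factorial : ℚ)⁻¹) • f n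

lemma egf_conv [Algebra ℚ R] (f g : ℕ → R) : egf (conv f g) = egf f * egf g := by
  ext n
  rw [PowerSeries.coeff_mul, Finset.Nat.sum_antidiagonal_eq_sum_range_succ_mk]
  simp only [egf, PowerSeries.coeff_mk, conv, Finset.smul_sum]
  refine Finset.sum_congr rfl fun k hk => ?_
  have hk' : k ≤ n := by simp at hk; omega
  rw [smul_mul_smul_comm, ← Nat.cast_smul_eq_nsmul ℚ, smul_smul]
  congr 1
  rw [Nat.cast_choose ℚ hk']
  have h1 : (n.factorial : ℚ) ≠ 0 := by positivity
  field_simp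

lemma egf_deriv [Algebra ℚ R] (f : ℕ → R) :
    PowerSeries.derivative R (egf f) = egf (fun n => f (n + 1)) := by
  ext n
  rw [PowerSeries.coeff_derivative]
  simp only [egf, PowerSeries.coeff_mk]
  have : ((n : R) + 1) = algebraMap ℚ R (n + 1) := by simp
  rw [this, mul_comm, ← Algebra.smul_def, smul_smul]
  congr 1
  rw [Nat.factorial_succ]
  have h1 : (n.factorial : ℚ) ≠ 0 := by positivity
  push_cast
  field_simp

lemma egf_inj [Algebra ℚ R] (f g : ℕ → R) (h : egf f = egf g) : f = g := by
  funext n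
  have := congrArg (PowerSeries.coeff n) h
  simp only [egf, PowerSeries.coeff_mk] at this
  have h1 : (n.factorial : ℚ) ≠ 0 := by positivity
  have h2 := congrArg (fun z => (n.factorial : ℚ) • z) this
  simpa [smul_smul, h1] using h2

lemma egf_ev_od [Algebra ℚ R] (f : ℕ → R) : egf f = egf (ev f) + egf (od f) := by
  ext n
  simp only [egf, PowerSeries.coeff_mk, map_add, ev, od, ← Nat.not_even_iff_odd]
  split_ifs <;> simp

lemma y_rec [Algebra ℚ R] (t : R) :
    (fun n => conv (w t) (lq t) (n + 1)) = conv (fun m => t * w 1 m) (conv (w t) (lq t)) := by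
  apply egf_inj
  rw [← egf_deriv, egf_conv, egf_conv, egf_conv, Derivation.leibniz, egf_deriv, egf_deriv]
  have h1 : (fun n => w t (n + 1)) = conv (w t) (ev fun m => t * w 1 m) := funext (w_rec t)
  have h2 : (fun n => lq t (n + 1)) = conv (od fun m => t * w 1 m) (lq t) := funext (lq_rec t)
  rw [h1, h2, egf_conv, egf_conv, egf_ev_od (fun m => t * w 1 m)]
  simp only [smul_eq_mul]
  ring

lemma x_eq_y [Algebra ℚ R] (t : R) (n : ℕ) : xq t n = conv (w t) (lq t) n := by
  induction n using Nat.strong_induction_on with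
  | _ n ih =>
  cases n with
  | zero => simp [xq, conv, w, lq, Wt_empty, Lt_empty, Xt_single]
  | succ n =>
    rw [xq_rec, congrFun (y_rec t) n]
    unfold conv at ih ⊢
    refine Finset.sum_congr rfl fun k hk => ?_
    rw [ih (n - k) (by omega)]

theorem main_sum [Algebra ℚ R] (t : R) (n : ℕ) :
    t ^ 2 * Xt t (Finset.range (n + 1)) = Yt t (Finset.range (n + 1)) := by
  rw [Yt_eq, ← x_eq_y]; rfl

end sums

section connect
open Classical

lemma alt_iff : ∀ (l : List ℕ) (b : Bool), alt b l ↔ ∀ (i : ℕ) (h : i + 1 < l.length),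
    ltb (if i % 2 = 0 then b else !b) (l[i]) (l[i + 1])
  | [], b => by simp [alt]
  | [a], b => by simp [alt]
  | a :: c :: t, b => by
    rw [alt, alt_iff (c :: t) (!b)]
    constructor
    · rintro ⟨h1, h2⟩ i hi
      cases i with
      | zero => simpa using h1
      | succ i =>
        have := h2 i (by simpa using hi)
        rcases Nat.mod_two_eq_zero_or_one i with h | h
        · have h' : (i + 1) % 2 = 1 := by omega
          simpa [h, h'] using this
        · have h' : (i + 1) % 2 = 0 := by omega
          simpa [h, h'] using this
    · intro h
      refine ⟨by simpa using h 0 (by simp), fun i hi => ?_⟩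
      have := h (i + 1) (by simpa using hi)
      rcases Nat.mod_two_eq_zero_or_one i with h | h
      · have h' : (i + 1) % 2 = 1 := by omega
        simpa [h, h'] using this
      · have h' : (i + 1) % 2 = 0 := by omega
        simpa [h, h'] using this

lemma updown_iff {n : ℕ} (π : Equiv.Perm (Fin n)) : IsUpDownPerm π ↔ alt true (oneLine π) := by
  rw [alt_iff]
  unfold IsUpDownPerm oneLine
  constructor
  · intro h i hi
    simp only [List.length_ofFn] at hi
    have := h ⟨i, by omega⟩ ⟨i + 1, hi⟩ rfl
    simp only [List.getElem_ofFn]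
    rcases Nat.mod_two_eq_zero_or_one i with h | h
    · simpa [h, ltb] using this.1 h
    · simpa [h, ltb] using this.2 h
  · rintro h ⟨i, hi⟩ ⟨j, hj⟩ hij
    simp only at hij
    subst hij
    have := h i (by simpa using hj)
    simp only [List.getElem_ofFn] at this
    rcases Nat.mod_two_eq_zero_or_one i with h | h
    · simpa [h, ltb] using this
    · simpa [h, ltb] using this

lemma card_sum {n : ℕ} (p : Fin n → Prop) : Nat.card {i // p i} = ∑ i, if p i then 1 else 0 := by
  rw [Nat.card_eq_fintype_card, Fintype.card_subtype, Finset.card_filter]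

lemma forall_last {n : ℕ} (q : Fin (n + 1) → Prop) :
    (∀ j, j < Fin.last n → q j) ↔ ∀ j : Fin n, q j.castSucc := by
  constructor
  · intro h j; exact h _ (Fin.castSucc_lt_last j)
  · intro h j hj
    obtain ⟨i, rfl⟩ := Fin.exists_castSucc_eq.2 (ne_of_lt hj)
    exact h i

lemma forall_cs {n : ℕ} (i : Fin n) (q : Fin (n + 1) → Prop) :
    (∀ j, j < i.castSucc → q j) ↔ ∀ j : Fin n, j < i → q j.castSucc := by
  constructor
  · intro h j hj; exact h _ (by simpa using hj)
  · intro h j hj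
    obtain ⟨k, rfl⟩ := Fin.exists_castSucc_eq.2 (ne_of_lt (hj.trans (Fin.castSucc_lt_last i)))
    exact h k (by simpa using hj)

lemma lrm_fn : ∀ (n : ℕ) (f : Fin n → ℕ),
    (∑ i, if (∀ j, j < i → f i < f j) then 1 else 0) = lrmL (List.ofFn f) := by
  intro n
  induction n with
  | zero => intro f; simp [lrmL, rlrm]
  | succ n ih =>
    intro f
    rw [Fin.sum_univ_castSucc]
    simp only [forall_last (fun j => f (Fin.last n) < f j)]
    have : ∀ i : Fin n, (∀ j, j < i.castSucc → f i.castSucc < f j) ↔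
      ∀ j, j < i → f i.castSucc < f j.castSucc := fun i => forall_cs i _
    simp only [this]
    rw [ih (fun i => f i.castSucc)]
    unfold lrmL
    rw [List.ofFn_succ', List.concat_eq_append, List.reverse_append]
    simp [rlrm, List.mem_ofFn]

lemma ext_fn : ∀ (n : ℕ) (f : Fin n → ℕ),
    (∑ i : Fin n, if ((i : ℕ) ≠ 0 ∧ ((∀ j, j < i → f i < f j) ∨ (∀ j, j < i → f j < f i)))
      then 1 else 0) = extL (List.ofFn f) := by
  intro n
  induction n with
  | zero => intro f; simp [extL, rext]
  | succ n ih =>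
    intro f
    rw [Fin.sum_univ_castSucc]
    simp only [forall_last (fun j => f (Fin.last n) < f j), forall_last (fun j => f j < f (Fin.last n))]
    have h1 : ∀ i : Fin n, (∀ j, j < i.castSucc → f i.castSucc < f j) ↔
      ∀ j, j < i → f i.castSucc < f j.castSucc := fun i => forall_cs i _
    have h2 : ∀ i : Fin n, (∀ j, j < i.castSucc → f j < f i.castSucc) ↔
      ∀ j, j < i → f j.castSucc < f i.castSucc := fun i => forall_cs i (fun j => f j < f i.castSucc)
    simp only [h1, h2, Fin.val_castSucc]
    rw [ih (fun i => f i.castSucc)]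
    unfold extL
    rw [List.ofFn_succ', List.concat_eq_append, List.reverse_append]
    simp [rext, List.mem_ofFn, List.ofFn_eq_nil_iff]

lemma lrm_eq {n : ℕ} (π : Equiv.Perm (Fin n)) : lrmCount π = lrmL (oneLine π) := by
  unfold lrmCount oneLine
  rw [card_sum, ← lrm_fn]
  simp only [Fin.val_fin_lt]
  congr!

lemma ext_eq {n : ℕ} (π : Equiv.Perm (Fin n)) : extrCount π = extL (oneLine π) := by
  unfold extrCount oneLine
  rw [card_sum, ← ext_fn]
  simp only [Fin.val_fin_lt]
  congr!

lemma st_eq {n : ℕ} (π : Equiv.Perm (Fin n)) : stStat π = stL true (oneLine π) := by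
  simp [stStat, msStat, msLen, stL]

lemma oneLine_mem {n : ℕ} (π : Equiv.Perm (Fin n)) : oneLine π ∈ Ls (Finset.range n) := by
  rw [mem_Ls]
  unfold oneLine
  constructor
  · rw [List.nodup_ofFn]
    exact Fin.val_injective.comp π.injective
  · ext x
    simp only [List.mem_toFinset, List.mem_ofFn, Finset.mem_range]
    constructor
    · rintro ⟨i, rfl⟩; exact (π i).2
    · intro hx; exact ⟨π.symm ⟨x, hx⟩, by simp⟩

lemma oneLine_inj {n : ℕ} : Function.Injective (oneLine : Equiv.Perm (Fin n) → List ℕ) := by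
  intro π σ h
  have := List.ofFn_injective h
  ext i
  exact congrFun this i

lemma oneLine_surj {n : ℕ} (l : List ℕ) (hl : l ∈ Ls (Finset.range n)) :
    ∃ π : Equiv.Perm (Fin n), oneLine π = l := by
  have hlen : l.length = n := by simpa using length_Ls hl
  have hm := mem_of_Ls hl
  have hn := (mem_Ls.1 hl).1
  subst hlen
  let f : Fin l.length → Fin l.length := fun i =>
    ⟨l[i], by have := (hm l[i]).1 (List.getElem_mem _); simpa using this⟩
  have hf : Function.Injective f := by
    intro i j hij
    have : l[i] = l[j] := congrArg Fin.val hij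
    exact Fin.ext ((hn.getElem_inj_iff).1 this)
  refine ⟨Equiv.ofBijective f (Finite.injective_iff_bijective.1 hf), ?_⟩
  unfold oneLine
  simp [f]

lemma card_perm (n : ℕ) (P : List ℕ → Prop) :
    Nat.card {π : Equiv.Perm (Fin n) // P (oneLine π)} = ((Ls (Finset.range n)).filter P).card := by
  rw [Nat.card_eq_fintype_card, Fintype.card_subtype]
  refine Finset.card_bij (fun π _ => oneLine π) ?_ ?_ ?_
  · intro π hπ
    simp only [Finset.mem_filter, Finset.mem_univ, true_and] at hπ ⊢
    exact ⟨oneLine_mem π, hπ⟩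
  · intro π _ σ _ h; exact oneLine_inj h
  · intro l hl
    simp only [Finset.mem_filter] at hl
    obtain ⟨π, rfl⟩ := oneLine_surj l hl.1
    exact ⟨π, by simpa using hl.2, rfl⟩

lemma coeff_sum (s : Finset (List ℕ)) (P : List ℕ → Prop) (g : List ℕ → ℕ) (k : ℕ) :
    (∑ l ∈ s, if P l then (Polynomial.X : Polynomial ℚ) ^ g l else 0).coeff k =
      ((s.filter fun l => P l ∧ g l = k).card : ℚ) := by
  rw [Polynomial.finsetSum_coeff, Finset.card_filter]
  push_cast
  refine Finset.sum_congr rfl fun l _ => ?_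
  by_cases h : P l <;> simp [h, Polynomial.coeff_X_pow, eq_comm]

end connect

end UD

/-- `extr` and `lrm + st − 2` are equidistributed on up-down permutations. -/
theorem stmt12 (n k : ℕ) (hn : 1 ≤ n) (hk : 1 ≤ k) :
    Nat.card {π : Equiv.Perm (Fin (n + 1)) // IsUpDownPerm π ∧ extrCount π = k} =
      Nat.card {π : Equiv.Perm (Fin (n + 1)) //
        IsUpDownPerm π ∧ lrmCount π + stStat π = k + 2} := by
  have h := congrArg (fun p => Polynomial.coeff p (k + 2))
    (UD.main_sum (Polynomial.X : Polynomial ℚ) n)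
  rw [mul_comm, Polynomial.coeff_mul_X_pow, UD.Xt, UD.Yt, UD.coeff_sum, UD.coeff_sum] at h
  simp only [UD.updown_iff, UD.ext_eq, UD.lrm_eq, UD.st_eq]
  rw [UD.card_perm (n + 1) (fun l => UD.alt true l ∧ UD.extL l = k),
    UD.card_perm (n + 1) (fun l => UD.alt true l ∧ UD.lrmL l + UD.stL true l = k + 2)]
  replace h := Nat.cast_injective h
  convert h
end

section
/- For every n ≥ 0 and every cycle-up-down permutation π of [n], one has c_o(π) + 2·exc(π) = n, where c_o(π) is the number of odd-length cycles of π and exc(π) is the number of excedances of π. -/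
open Equiv Finset

lemma aux_exists {n : ℕ} (π : Equiv.Perm (Fin n)) (y : Fin n) :
    ∃ x, IsOrbitMin π x ∧ ∃ i, i < cycLen π x ∧ y = (π ^ i) x := by
  classical
  obtain ⟨x, hx, hmin⟩ := Finset.exists_min_image
    (Finset.univ.filter fun z => π.SameCycle y z) id ⟨y, by simp [Equiv.Perm.SameCycle.refl]⟩
  simp only [Finset.mem_filter, Finset.mem_univ, true_and, id] at hx hmin
  refine ⟨x, fun k => hmin _ ?_, ?_⟩
  · exact hx.trans ⟨k, by simp⟩
  · obtain ⟨i, hi, h2⟩ := hx.symm.exists_pow_eq'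
    have hp : 0 < cycLen π x :=
      Function.IsPeriodicPt.minimalPeriod_pos (orderOf_pos π)
        (by rw [Function.IsPeriodicPt, Function.IsFixedPt, Equiv.Perm.iterate_eq_pow,
              pow_orderOf_eq_one]; rfl)
    refine ⟨i % cycLen π x, Nat.mod_lt _ hp, ?_⟩
    rw [← h2, ← Equiv.Perm.iterate_eq_pow, ← Equiv.Perm.iterate_eq_pow]
    exact Function.iterate_mod_minimalPeriod_eq.symm

lemma aux_per {n : ℕ} (π : Equiv.Perm (Fin n)) (x : Fin n) : (π ^ (cycLen π x)) x = x := by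
  rw [← Equiv.Perm.iterate_eq_pow]; exact Function.iterate_minimalPeriod

lemma aux_exc {n : ℕ} (π : Equiv.Perm (Fin n)) (h : IsCUD π) (x : Fin n)
    (hx : IsOrbitMin π x) (i : ℕ) (hi : i < cycLen π x) :
    (π ^ i) x < (π ^ (i+1)) x ↔ (i % 2 = 0 ∧ i + 1 < cycLen π x) := by
  by_cases hl : i + 1 < cycLen π x
  · have := h x hx i hl
    rcases Nat.mod_two_eq_zero_or_one i with h0 | h0
    · simp [h0, hl, this.1 h0]
    · simp [h0, (this.2 h0).le]
  · have : i + 1 = cycLen π x := by omega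
    rw [this, aux_per]
    simp [hx i]

lemma aux_min {n : ℕ} (π : Equiv.Perm (Fin n)) (x : Fin n)
    (hx : IsOrbitMin π x) (i : ℕ) (hi : i < cycLen π x) :
    IsOrbitMin π ((π ^ (i+1)) x) ↔ i + 1 = cycLen π x := by
  constructor
  · intro hm
    have h1 := hm (cycLen π x - (i+1))
    rw [← Equiv.Perm.mul_apply, ← pow_add, Nat.sub_add_cancel hi, aux_per] at h1
    have h2 : (π ^ (i+1)) x = x := le_antisymm h1 (hx _)
    rw [← Equiv.Perm.iterate_eq_pow] at h2
    have := Nat.le_of_dvd (by omega) (Function.IsPeriodicPt.minimalPeriod_dvd h2)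
    unfold cycLen at *
    omega
  · intro e
    rw [e, aux_per]; exact hx

open Classical in
lemma aux_one {n : ℕ} (π : Equiv.Perm (Fin n)) (h : IsCUD π) (y : Fin n) :
    (if IsOrbitMin π (π y) ∧ Odd (cycLen π (π y)) then 1 else 0) +
    ((if y < π y then 1 else 0) + (if π.symm y < π (π.symm y) then 1 else 0)) = 1 := by
  obtain ⟨x, hx, i, hi, rfl⟩ := aux_exists π y
  have e1 : π ((π ^ i) x) = (π ^ (i+1)) x := by rw [pow_succ', Equiv.Perm.mul_apply]
  have a1 : (IsOrbitMin π (π ((π ^ i) x)) ∧ Odd (cycLen π (π ((π ^ i) x)))) ↔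
      (i + 1 = cycLen π x ∧ i % 2 = 0) := by
    rw [e1, aux_min π x hx i hi]
    refine and_congr_right fun e => ?_
    rw [e, aux_per, ← e, Nat.odd_iff]; omega
  have a2 := aux_exc π h x hx i hi
  have a3 : π.symm ((π ^ i) x) < π (π.symm ((π ^ i) x)) ↔ i % 2 = 1 := by
    rw [Equiv.apply_symm_apply]
    rcases i with _ | j
    · have : π.symm x = (π ^ (cycLen π x - 1)) x := by
        rw [Equiv.symm_apply_eq, ← Equiv.Perm.mul_apply, ← pow_succ',
          Nat.sub_add_cancel hi, aux_per]
      simp [this, hx (cycLen π x - 1)]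
    · have : π.symm ((π ^ (j+1)) x) = (π ^ j) x := by
        rw [Equiv.symm_apply_eq, pow_succ', Equiv.Perm.mul_apply]
      rw [this, aux_exc π h x hx j (by omega)]; omega
  simp only [a1, a3]
  rw [e1]
  simp only [a2]
  split_ifs <;> omega

/-- for CUD permutations, `c_o(π) + 2 exc(π) = n`. -/
theorem stmt13 (n : ℕ) (π : Equiv.Perm (Fin n)) (h : IsCUD π) :
    oddCycleCount π + 2 * excCount π = n := by
  classical
  have key := Finset.sum_congr (rfl : (Finset.univ : Finset (Fin n)) = Finset.univ)
    (fun y _ => aux_one π h y)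
  rw [Finset.sum_add_distrib, Finset.sum_add_distrib,
    Equiv.sum_comp π (fun z => if IsOrbitMin π z ∧ Odd (cycLen π z) then 1 else 0),
    Equiv.sum_comp π.symm (fun z => if z < π z then 1 else 0)] at key
  simp only [Finset.sum_boole, Finset.sum_const, Finset.card_univ, Fintype.card_fin,
    smul_eq_mul, mul_one, Nat.cast_id] at key
  unfold oddCycleCount excCount
  rw [Nat.card_eq_fintype_card, Nat.card_eq_fintype_card, Fintype.card_subtype,
    Fintype.card_subtype]
  omega
end

section
/- For all n ≥ 1 and k ≥ 1, the number of permutations π of [n] with st(π) = k equals the signless Stirling number of the first kind c(n,k), i.e., the number of permutations of [n] with exactly k cycles. -/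
open Equiv Finset

theorem aux_fmin (a : ℕ) (l : List ℕ) (y : ℕ) :
    y ≤ l.foldr min a ↔ y ≤ a ∧ ∀ x ∈ l, y ≤ x := by
  induction l with
  | nil => simp
  | cons b t ih => simp only [List.foldr_cons, le_min_iff, ih, List.mem_cons, forall_eq_or_imp]; tauto

theorem aux_fmax (a : ℕ) (l : List ℕ) (y : ℕ) :
    l.foldr max a ≤ y ↔ a ≤ y ∧ ∀ x ∈ l, x ≤ y := by
  induction l with
  | nil => simp
  | cons b t ih => simp only [List.foldr_cons, max_le_iff, ih, List.mem_cons, forall_eq_or_imp]; tauto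

theorem aux_tail_len (p : ℕ → Bool) (a : ℕ) (t : List ℕ) :
    (((a :: t).dropWhile p).tail).length ≤ t.length := by
  have := (List.dropWhile_sublist p (l := a :: t)).length_le
  simp only [List.length_tail, List.length_cons] at *
  omega

theorem aux_fuel (m₁ : ℕ) : ∀ (m₂ : ℕ) (s : ℕ → Bool) (l : List ℕ), l.length ≤ m₁ → l.length ≤ m₂ →
    msLenAux m₁ s l = msLenAux m₂ s l := by
  induction m₁ with
  | zero =>
    intro m₂ s l h _
    have : l = [] := List.length_eq_zero_iff.mp (by omega)
    subst this
    cases m₂ <;> simp [msLenAux]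
  | succ m ih =>
    intro m₂ s l h₁ h₂
    cases l with
    | nil => cases m₂ <;> simp [msLenAux]
    | cons a t =>
      cases m₂ with
      | zero => simp at h₂
      | succ m₂ =>
        simp only [msLenAux]
        congr 1
        have := aux_tail_len (· != if s 0 = true then (a :: t).foldr min a else (a :: t).foldr max a) a t
        simp only [List.length_cons] at h₁ h₂
        exact ih _ _ _ (by omega) (by omega)

theorem msLen_cons (s : ℕ → Bool) (a : ℕ) (t : List ℕ) :
    msLen s (a :: t) = 1 + msLen (fun i => s (i + 1)) (((a :: t).dropWhile
      (· != if s 0 = true then (a :: t).foldr min a else (a :: t).foldr max a)).tail) := by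
  unfold msLen
  simp only [List.length_cons, msLenAux]
  congr 1
  exact aux_fuel _ _ _ _ (aux_tail_len _ a t) le_rfl

theorem msLen_special (s : ℕ → Bool) (a : ℕ) (t : List ℕ)
    (h : ∀ x ∈ t, if s 0 = true then a ≤ x else x ≤ a) :
    msLen s (a :: t) = 1 + msLen (fun i => s (i + 1)) t := by
  rw [msLen_cons]
  have : (if s 0 = true then (a :: t).foldr min a else (a :: t).foldr max a) = a := by
    split_ifs at h ⊢ with hs
    · exact eq_of_forall_le_iff fun y => by
        rw [aux_fmin]; simp only [List.mem_cons, forall_eq_or_imp]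
        exact ⟨fun h => h.1, fun hy => ⟨hy, hy, fun x hx => hy.trans (h x hx)⟩⟩
    · exact eq_of_forall_ge_iff fun y => by
        rw [aux_fmax]; simp only [List.mem_cons, forall_eq_or_imp]
        exact ⟨fun h => h.1, fun hy => ⟨hy, hy, fun x hx => (h x hx).trans hy⟩⟩
  rw [this]
  simp

theorem msLen_skip (s : ℕ → Bool) (a : ℕ) (t : List ℕ)
    (h : ∃ x ∈ t, if s 0 = true then x < a else a < x) :
    msLen s (a :: t) = msLen s t := by
  obtain ⟨x, hx, h⟩ := h
  cases t with
  | nil => simp at hx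
  | cons b u =>
    rw [msLen_cons, msLen_cons]
    have : (if s 0 = true then (a :: b :: u).foldr min a else (a :: b :: u).foldr max a)
        = (if s 0 = true then (b :: u).foldr min b else (b :: u).foldr max b) := by
      split_ifs at h ⊢ with hs
      · exact eq_of_forall_le_iff fun y => by
          rw [aux_fmin, aux_fmin]
          refine ⟨fun q => ⟨q.2 b (by simp), fun z hz => q.2 z (List.mem_cons_of_mem _ hz)⟩, fun q => ?_⟩
          have ha := (q.2 x hx).trans h.le
          refine ⟨ha, fun z hz => ?_⟩
          rcases List.mem_cons.1 hz with rfl | hz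
          · exact ha
          · exact q.2 z hz
      · exact eq_of_forall_ge_iff fun y => by
          rw [aux_fmax, aux_fmax]
          refine ⟨fun q => ⟨q.2 b (by simp), fun z hz => q.2 z (List.mem_cons_of_mem _ hz)⟩, fun q => ?_⟩
          have ha := h.le.trans (q.2 x hx)
          refine ⟨ha, fun z hz => ?_⟩
          rcases List.mem_cons.1 hz with rfl | hz
          · exact ha
          · exact q.2 z hz
    rw [this]
    have hne : a ≠ (if s 0 = true then (b :: u).foldr min b else (b :: u).foldr max b) := by
      split_ifs at h ⊢ with hs
      · intro e
        have := ((aux_fmin b (b :: u) a).1 e.le).2 x hx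
        omega
      · intro e
        have := ((aux_fmax b (b :: u) a).1 e.ge).2 x hx
        omega
    rw [List.dropWhile_cons_of_pos (by simpa using hne)]

theorem aux_map (f : ℕ → ℕ) (hf : StrictMono f) (m : ℕ) : ∀ (s : ℕ → Bool) (l : List ℕ),
    msLenAux m s (l.map f) = msLenAux m s l := by
  induction m with
  | zero => intro s l; simp [msLenAux]
  | succ m ih =>
    intro s l
    cases l with
    | nil => simp [msLenAux]
    | cons a t =>
      have h1 : ∀ l : List ℕ, (l.map f).foldr min (f a) = f (l.foldr min a) := by
        intro l
        induction l with
        | nil => rfl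
        | cons c l ih => simp [ih, hf.monotone.map_min]
      have h2 : ∀ l : List ℕ, (l.map f).foldr max (f a) = f (l.foldr max a) := by
        intro l
        induction l with
        | nil => rfl
        | cons c l ih => simp [ih, hf.monotone.map_max]
      simp only [List.map_cons, msLenAux]
      rw [← List.map_cons, h1, h2, ← apply_ite f, List.dropWhile_map, ← List.map_tail, ih]
      congr 4
      funext x
      simp [hf.injective.eq_iff, bne]

theorem msLen_map (f : ℕ → ℕ) (hf : StrictMono f) (s : ℕ → Bool) (l : List ℕ) :
    msLen s (l.map f) = msLen s l := by
  unfold msLen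
  rw [List.length_map, aux_map f hf]

/-- The generic counting step. -/
theorem aux_count (n : ℕ) (Ψ : Option (Fin n) × Perm (Fin n) ≃ Perm (Fin (n + 1)))
    (f : Perm (Fin (n + 1)) → ℕ) (g h : Perm (Fin n) → ℕ)
    (h1 : ∀ e, f (Ψ (none, e)) = 1 + g e) (h2 : ∀ q e, f (Ψ (some q, e)) = h e)
    (hg : ∀ k, Nat.card {e // g e = k} = Nat.stirlingFirst n k)
    (hh : ∀ k, Nat.card {e // h e = k} = Nat.stirlingFirst n k) (k : ℕ) :
    Nat.card {π // f π = k} = Nat.stirlingFirst (n + 1) k := by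
  classical
  have key : ∀ {α : Type} [Fintype α] (f : α → ℕ) (k : ℕ),
      Nat.card {e // f e = k} = ∑ e, if f e = k then 1 else 0 := by
    intro α _ f k
    rw [Nat.card_eq_fintype_card, Fintype.card_subtype, Finset.card_filter]
  simp only [key] at *
  rw [← Ψ.sum_comp, Fintype.sum_prod_type, Fintype.sum_option]
  simp only [h1, h2]
  simp only [hh]
  cases k with
  | zero =>
    cases n with
    | zero => simp
    | succ n => simp
  | succ k =>
    have : ∀ e, (1 + g e = k + 1) = (g e = k) := by intro e; apply propext; omega
    simp only [this, hg, Nat.stirlingFirst_succ_succ]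
    simp
    ring

/-- Prepend a first value. -/
noncomputable def consPerm {n : ℕ} (v : Fin (n + 1)) (p : Option (Fin n) × Perm (Fin n)) :
    Perm (Fin (n + 1)) :=
  ((finSuccEquiv n).trans (optionCongr p.2)).trans (finSuccEquiv' ((finSuccEquiv' v).symm p.1)).symm

theorem consPerm_zero {n : ℕ} (v : Fin (n + 1)) (p : Option (Fin n) × Perm (Fin n)) :
    consPerm v p 0 = (finSuccEquiv' v).symm p.1 := by
  simp [consPerm]

theorem consPerm_succ {n : ℕ} (v : Fin (n + 1)) (p : Option (Fin n) × Perm (Fin n)) (i : Fin n) :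
    consPerm v p i.succ = ((finSuccEquiv' v).symm p.1).succAbove (p.2 i) := by
  simp [consPerm]

theorem consPerm_bij {n : ℕ} (v : Fin (n + 1)) : Function.Bijective (consPerm (n := n) v) := by
  rw [Fintype.bijective_iff_injective_and_card]
  constructor
  · rintro ⟨o, e⟩ ⟨o', e'⟩ h
    have h0 : o = o' := by
      have := congrArg (fun π => π 0) h
      simpa [consPerm_zero] using this
    subst h0
    congr 1
    ext i
    have := congrArg (fun π => π i.succ) h
    simp only [consPerm_succ] at this
    rw [Fin.succAbove_right_injective this]
  · simp [Fintype.card_perm, Nat.factorial_succ]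

theorem oneLine_consPerm {n : ℕ} (v : Fin (n + 1)) (p : Option (Fin n) × Perm (Fin n)) :
    oneLine (consPerm v p) = (((finSuccEquiv' v).symm p.1 : Fin (n + 1)) : ℕ) ::
      (oneLine p.2).map (fun x => if x < (((finSuccEquiv' v).symm p.1 : Fin (n + 1)) : ℕ)
        then x else x + 1) := by
  unfold oneLine
  rw [List.ofFn_succ, consPerm_zero, List.map_ofFn]
  congr 2
  funext i
  rw [consPerm_succ]
  simp only [Fin.succAbove, Function.comp, Fin.lt_def]
  split_ifs <;> simp_all

theorem aux_sm (a : ℕ) : StrictMono (fun x => if x < a then x else x + 1) := by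
  intro x y h
  dsimp only
  split_ifs <;> omega

theorem mem_oneLine {n : ℕ} (e : Perm (Fin n)) (x : ℕ) : x ∈ oneLine e ↔ x < n := by
  simp only [oneLine, List.mem_ofFn]
  constructor
  · rintro ⟨i, rfl⟩; exact (e i).2
  · intro h; exact ⟨e.symm ⟨x, h⟩, by simp⟩

theorem ms_count (n : ℕ) : ∀ (s : ℕ → Bool) (k : ℕ),
    Nat.card {π : Perm (Fin n) // msStat s π = k} = Nat.stirlingFirst n k := by
  induction n with
  | zero =>
    intro s k
    have : ∀ π : Perm (Fin 0), msStat s π = 0 := by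
      intro π; simp [msStat, msLen, oneLine, msLenAux]
    simp only [this]
    cases k with
    | zero => simp
    | succ k => simp
  | succ n ih =>
    intro s k
    refine aux_count n (Equiv.ofBijective _ (consPerm_bij (if s 0 = true then 0 else Fin.last n)))
      _ _ _ ?_ ?_ (ih (fun i => s (i + 1))) (ih s) k
    · intro e
      simp only [Equiv.ofBijective_apply, msStat, oneLine_consPerm]
      rw [msLen_special, msLen_map _ (aux_sm _)]
      intro x hx
      rw [List.mem_map] at hx
      obtain ⟨y, hy, rfl⟩ := hx
      rw [mem_oneLine] at hy
      split_ifs <;> simp_all <;> omega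
    · intro q e
      simp only [Equiv.ofBijective_apply, msStat, oneLine_consPerm]
      rw [msLen_skip, msLen_map _ (aux_sm _)]
      have hq := q.2
      split_ifs with hs
      · refine ⟨0, ?_, by simp⟩
        rw [List.mem_map]
        refine ⟨0, (mem_oneLine _ _).2 (by omega), ?_⟩
        simp
      · refine ⟨n, ?_, by simp⟩
        rw [List.mem_map]
        refine ⟨n - 1, (mem_oneLine _ _).2 (by omega), ?_⟩
        simp
        split_ifs <;> omega

/-- Insert the largest element into a cycle. -/
noncomputable def insPerm (n : ℕ) : Option (Fin n) × Perm (Fin n) ≃ Perm (Fin (n + 1)) :=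
  Equiv.Perm.decomposeOption.symm.trans (Equiv.permCongr finSuccEquivLast.symm)

theorem insPerm_last {n : ℕ} (o : Option (Fin n)) (e : Perm (Fin n)) :
    insPerm n (o, e) (Fin.last n) = finSuccEquivLast.symm o := by
  simp [insPerm, Equiv.permCongr_apply]

theorem insPerm_cs {n : ℕ} (o : Option (Fin n)) (e : Perm (Fin n)) (x : Fin n) :
    insPerm n (o, e) x.castSucc = if o = some (e x) then Fin.last n else (e x).castSucc := by
  simp only [insPerm, Equiv.trans_apply, Equiv.permCongr_apply]
  split_ifs with h
  · subst h; simp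
  · simp [Equiv.swap_apply_of_ne_of_ne (a := none) (b := o) (x := some (e x)) (by simp) (Ne.symm h)]

theorem orbitMin_cs {n : ℕ} (o : Option (Fin n)) (e : Perm (Fin n)) (x : Fin n) :
    IsOrbitMin (insPerm n (o, e)) x.castSucc ↔ IsOrbitMin e x := by
  have A : ∀ k : ℕ, ∃ m : ℕ, (insPerm n (o, e) ^ m) x.castSucc = ((e ^ k) x).castSucc := by
    intro k
    induction k with
    | zero => exact ⟨0, rfl⟩
    | succ k ih =>
      obtain ⟨m, hm⟩ := ih
      by_cases h : o = some (e ((e ^ k) x))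
      · refine ⟨m + 2, ?_⟩
        rw [pow_succ', pow_succ', Perm.mul_apply, Perm.mul_apply, hm, insPerm_cs, if_pos h,
          insPerm_last, h, pow_succ', Perm.mul_apply]
        simp
      · refine ⟨m + 1, ?_⟩
        rw [pow_succ', Perm.mul_apply, hm, insPerm_cs, if_neg h, pow_succ', Perm.mul_apply]
  have B : ∀ k : ℕ, ∃ j : ℕ, (insPerm n (o, e) ^ k) x.castSucc = ((e ^ j) x).castSucc ∨
      ((insPerm n (o, e) ^ k) x.castSucc = Fin.last n ∧ o = some ((e ^ j) x)) := by
    intro k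
    induction k with
    | zero => exact ⟨0, Or.inl rfl⟩
    | succ k ih =>
      obtain ⟨j, hj | ⟨hj, ho⟩⟩ := ih
      · refine ⟨j + 1, ?_⟩
        rw [pow_succ', Perm.mul_apply, hj, insPerm_cs, pow_succ' e, Perm.mul_apply]
        split_ifs with h
        · exact Or.inr ⟨rfl, h⟩
        · exact Or.inl rfl
      · refine ⟨j, Or.inl ?_⟩
        rw [pow_succ', Perm.mul_apply, hj, insPerm_last, ho]
        simp
  constructor
  · intro h k
    obtain ⟨m, hm⟩ := A k
    have := h m
    rw [hm] at this
    exact this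
  · intro h k
    obtain ⟨j, hj | ⟨hj, _⟩⟩ := B k
    · rw [hj]; exact h j
    · rw [hj]; exact Fin.le_last _

theorem orbitMin_last {n : ℕ} (o : Option (Fin n)) (e : Perm (Fin n)) :
    IsOrbitMin (insPerm n (o, e)) (Fin.last n) ↔ o = none := by
  constructor
  · intro h
    have := h 1
    rw [pow_one, insPerm_last] at this
    cases o with
    | none => rfl
    | some q =>
      simp at this
  · rintro rfl k
    have : (insPerm n (none, e) ^ k) (Fin.last n) = Fin.last n := by
      induction k with
      | zero => rfl
      | succ k ih => rw [pow_succ', Perm.mul_apply, ih, insPerm_last]; simp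
    rw [this]

theorem cycleCount_ins {n : ℕ} (o : Option (Fin n)) (e : Perm (Fin n)) :
    cycleCount (insPerm n (o, e)) = (if o = none then 1 else 0) + cycleCount e := by
  classical
  unfold cycleCount
  rw [Nat.card_eq_fintype_card, Nat.card_eq_fintype_card, Fintype.card_subtype,
    Fintype.card_subtype, Finset.card_filter, Finset.card_filter, Fin.sum_univ_castSucc]
  simp only [orbitMin_cs, orbitMin_last]
  rw [add_comm]

theorem cyc_count (n : ℕ) : ∀ k : ℕ,
    Nat.card {π : Perm (Fin n) // cycleCount π = k} = Nat.stirlingFirst n k := by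
  induction n with
  | zero =>
    intro k
    have : ∀ π : Perm (Fin 0), cycleCount π = 0 := by
      intro π; simp [cycleCount]
    simp only [this]
    cases k with
    | zero => simp
    | succ k => simp
  | succ n ih =>
    intro k
    refine aux_count n (insPerm n) _ _ _ ?_ ?_ ih ih k
    · intro e; simp [cycleCount_ins]
    · intro q e; simp [cycleCount_ins]

/-- `st` is distributed like the number of cycles (Stirling numbers). -/
theorem stmt14 (n k : ℕ) (hn : 1 ≤ n) (hk : 1 ≤ k) :
    Nat.card {π : Equiv.Perm (Fin n) // stStat π = k} =
      Nat.card {π : Equiv.Perm (Fin n) // cycleCount π = k} := by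
  rw [cyc_count]
  exact ms_count n _ k
end

section
/- For all n ≥ 2 and k ≥ 1 with n ≥ k + 1, the number of permutations π of [n] with extr(π) = k equals 2^k · c(n−1, k), where c(n−1, k) is the signless Stirling number of the first kind. -/
open Equiv Finset

lemma aux_count_s16 {A B V : Type} [Fintype A] [Fintype B] [Fintype V] (Φ : V × B → A)
    (hΦ : Function.Bijective Φ) (s : A → ℕ) (t : B → ℕ) (P : V → Prop)
    [DecidablePred P]
    (h : ∀ v b, s (Φ (v, b)) = t b + if P v then 1 else 0) (k : ℕ) :
    Nat.card {a // s a = k + 1} = Nat.card {v // P v} * Nat.card {b // t b = k}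
      + Nat.card {v // ¬ P v} * Nat.card {b // t b = k + 1} := by
  classical
  have e : {a // s a = k + 1} ≃ {x : V × B // s (Φ x) = k + 1} :=
    ((Equiv.ofBijective Φ hΦ).subtypeEquiv (fun x => by simp)).symm
  rw [Nat.card_congr e, ← Nat.card_prod, ← Nat.card_prod, ← Nat.card_sum]
  refine Nat.card_congr ?_
  refine (Equiv.ofBijective
    (fun y : ({v // P v} × {b // t b = k}) ⊕ ({v // ¬ P v} × {b // t b = k + 1}) =>
      (match y with
      | Sum.inl y => ⟨(y.1.1, y.2.1), by rw [h, if_pos y.1.2, y.2.2]⟩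
      | Sum.inr y => ⟨(y.1.1, y.2.1), by rw [h, if_neg y.1.2, y.2.2]⟩ :
        {x : V × B // s (Φ x) = k + 1})) ⟨?_, ?_⟩).symm
  · rintro (⟨⟨a, ha⟩, ⟨b, hb⟩⟩ | ⟨⟨a, ha⟩, ⟨b, hb⟩⟩) (⟨⟨c, hc⟩, ⟨d, hd⟩⟩ | ⟨⟨c, hc⟩, ⟨d, hd⟩⟩) hh <;>
      simp at hh ⊢ <;> grind
  · rintro ⟨⟨v, b⟩, hx⟩
    rw [h] at hx
    by_cases hv : P v
    · rw [if_pos hv] at hx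
      exact ⟨Sum.inl (⟨v, hv⟩, ⟨b, by omega⟩), rfl⟩
    · rw [if_neg hv] at hx
      exact ⟨Sum.inr (⟨v, hv⟩, ⟨b, by omega⟩), rfl⟩

lemma aux_count_zero {A B V : Type} [Fintype A] [Fintype B] [Fintype V] (Φ : V × B → A)
    (hΦ : Function.Bijective Φ) (s : A → ℕ) (t : B → ℕ) (P : V → Prop)
    [DecidablePred P]
    (h : ∀ v b, s (Φ (v, b)) = t b + if P v then 1 else 0) :
    Nat.card {a // s a = 0} = Nat.card {v // ¬ P v} * Nat.card {b // t b = 0} := by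
  classical
  have e : {a // s a = 0} ≃ {x : V × B // s (Φ x) = 0} :=
    ((Equiv.ofBijective Φ hΦ).subtypeEquiv (fun x => by simp)).symm
  rw [Nat.card_congr e, ← Nat.card_prod]
  refine Nat.card_congr ?_
  refine (Equiv.ofBijective
    (fun y : ({v // ¬ P v} × {b // t b = 0}) =>
      (⟨(y.1.1, y.2.1), by rw [h, if_neg y.1.2, y.2.2]⟩ :
        {x : V × B // s (Φ x) = 0})) ⟨?_, ?_⟩).symm
  · rintro ⟨⟨a, ha⟩, ⟨b, hb⟩⟩ ⟨⟨c, hc⟩, ⟨d, hd⟩⟩ hh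
    simpa using hh
  · rintro ⟨⟨v, b⟩, hx⟩
    rw [h] at hx
    by_cases hv : P v
    · rw [if_pos hv] at hx
      omega
    · rw [if_neg hv] at hx
      exact ⟨(⟨v, hv⟩, ⟨b, by omega⟩), rfl⟩

lemma aux_split {n : ℕ} (Q : Fin (n + 1) → Prop) [Decidable (Q (Fin.last n))] :
    Nat.card {i // Q i} = Nat.card {i : Fin n // Q i.castSucc}
      + if Q (Fin.last n) then 1 else 0 := by
  classical
  rw [Nat.card_eq_fintype_card, Nat.card_eq_fintype_card, Fintype.card_subtype,
    Fintype.card_subtype, Finset.card_filter, Finset.card_filter, Fin.sum_univ_castSucc]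
  congr

/-- value-inserting map -/
def insV {n : ℕ} (x : Fin (n + 1) × Equiv.Perm (Fin n)) : Equiv.Perm (Fin (n + 1)) :=
  (finSuccEquivLast.trans (Equiv.optionCongr x.2)).trans (finSuccEquiv' x.1).symm

lemma insV_last {n : ℕ} (v : Fin (n + 1)) (σ : Equiv.Perm (Fin n)) :
    insV (v, σ) (Fin.last n) = v := by
  simp [insV]

lemma insV_castSucc {n : ℕ} (v : Fin (n + 1)) (σ : Equiv.Perm (Fin n)) (i : Fin n) :
    insV (v, σ) i.castSucc = v.succAbove (σ i) := by
  simp [insV]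

lemma insV_bij {n : ℕ} : Function.Bijective (insV (n := n)) := by
  rw [Fintype.bijective_iff_injective_and_card]
  constructor
  · rintro ⟨v, σ⟩ ⟨w, τ⟩ h
    have h1 : v = w := by
      have := congrArg (fun f => f (Fin.last n)) h
      simpa [insV_last] using this
    subst h1
    congr
    ext i
    have := congrArg (fun f => f i.castSucc) h
    simp only [insV_castSucc] at this
    rw [Fin.succAbove_right_injective this]
  · simp [Fintype.card_perm, Nat.factorial_succ]

/-- cycle-inserting map -/
def insC {n : ℕ} (x : Fin (n + 1) × Equiv.Perm (Fin n)) : Equiv.Perm (Fin (n + 1)) :=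
  ((finSuccEquivLast.trans (Equiv.optionCongr x.2)).trans finSuccEquivLast.symm).trans
    (Equiv.swap x.1 (Fin.last n))

lemma insC_last {n : ℕ} (v : Fin (n + 1)) (σ : Equiv.Perm (Fin n)) :
    insC (v, σ) (Fin.last n) = v := by
  simp [insC]

lemma insC_castSucc {n : ℕ} (v : Fin (n + 1)) (σ : Equiv.Perm (Fin n)) (i : Fin n) :
    insC (v, σ) i.castSucc = Equiv.swap v (Fin.last n) (σ i).castSucc := by
  simp [insC]

lemma insC_bij {n : ℕ} : Function.Bijective (insC (n := n)) := by
  rw [Fintype.bijective_iff_injective_and_card]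
  constructor
  · rintro ⟨v, σ⟩ ⟨w, τ⟩ h
    have h1 : v = w := by
      have := congrArg (fun f => f (Fin.last n)) h
      simpa [insC_last] using this
    subst h1
    congr
    ext i
    have := congrArg (fun f => f i.castSucc) h
    simp only [insC_castSucc] at this
    rw [Fin.castSucc_injective _ ((Equiv.swap v (Fin.last n)).injective this)]
  · simp [Fintype.card_perm, Nat.factorial_succ]

lemma insC_step {n : ℕ} (v : Fin (n + 1)) (σ : Equiv.Perm (Fin n)) (i : Fin n) :
    (v ≠ (σ i).castSucc ∧ insC (v, σ) i.castSucc = (σ i).castSucc) ∨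
    (v = (σ i).castSucc ∧ insC (v, σ) i.castSucc = Fin.last n) := by
  rw [insC_castSucc]
  by_cases h : v = (σ i).castSucc
  · right
    exact ⟨h, by rw [h, Equiv.swap_apply_left]⟩
  · left
    exact ⟨h, Equiv.swap_apply_of_ne_of_ne (Ne.symm h) (Fin.castSucc_lt_last _).ne⟩

lemma orbitMin_castSucc {n : ℕ} (v : Fin (n + 1)) (σ : Equiv.Perm (Fin n)) (x : Fin n) :
    IsOrbitMin (insC (v, σ)) x.castSucc ↔ IsOrbitMin σ x := by
  constructor
  · intro h k
    have key : ∃ k', (insC (v, σ) ^ k') x.castSucc = ((σ ^ k) x).castSucc := by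
      induction k with
      | zero => exact ⟨0, rfl⟩
      | succ k ih =>
        obtain ⟨k', hk'⟩ := ih
        rw [pow_succ', Equiv.Perm.mul_apply]
        rcases insC_step v σ ((σ ^ k) x) with ⟨-, h2⟩ | ⟨h1, h2⟩
        · exact ⟨k' + 1, by rw [pow_succ', Equiv.Perm.mul_apply, hk', h2]⟩
        · exact ⟨k' + 1 + 1, by
            rw [pow_succ', Equiv.Perm.mul_apply, pow_succ', Equiv.Perm.mul_apply, hk', h2,
              insC_last, h1]⟩
    obtain ⟨k', hk'⟩ := key
    have := h k'
    rw [hk'] at this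
    exact Fin.castSucc_le_castSucc_iff.1 this
  · intro h k
    have key : ∃ j, (insC (v, σ) ^ k) x.castSucc = ((σ ^ j) x).castSucc ∨
        ((insC (v, σ) ^ k) x.castSucc = Fin.last n ∧ v = ((σ ^ j) x).castSucc) := by
      induction k with
      | zero => exact ⟨0, Or.inl rfl⟩
      | succ k ih =>
        obtain ⟨j, hj | ⟨hj, hv⟩⟩ := ih
        · refine ⟨j + 1, ?_⟩
          rw [pow_succ', Equiv.Perm.mul_apply, hj, pow_succ', Equiv.Perm.mul_apply]
          rcases insC_step v σ ((σ ^ j) x) with ⟨-, h2⟩ | ⟨h1, h2⟩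
          · exact Or.inl h2
          · exact Or.inr ⟨h2, h1⟩
        · exact ⟨j, Or.inl (by rw [pow_succ', Equiv.Perm.mul_apply, hj, insC_last, hv])⟩
    obtain ⟨j, hj | ⟨hj, -⟩⟩ := key
    · rw [hj]
      exact Fin.castSucc_le_castSucc_iff.2 (h j)
    · rw [hj]
      exact Fin.le_last _

lemma orbitMin_last_s16 {n : ℕ} (v : Fin (n + 1)) (σ : Equiv.Perm (Fin n)) :
    IsOrbitMin (insC (v, σ)) (Fin.last n) ↔ v = Fin.last n := by
  constructor
  · intro h
    have := h 1
    rw [pow_one, insC_last] at this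
    exact Fin.last_le_iff.1 this
  · intro h k
    have : (insC (v, σ) ^ k) (Fin.last n) = Fin.last n := by
      induction k with
      | zero => rfl
      | succ k ih => rw [pow_succ', Equiv.Perm.mul_apply, ih, insC_last, h]
    rw [this]

lemma cycleCount_insC {n : ℕ} (v : Fin (n + 1)) (σ : Equiv.Perm (Fin n)) :
    cycleCount (insC (v, σ)) = cycleCount σ + if v = Fin.last n then 1 else 0 := by
  classical
  unfold cycleCount
  rw [aux_split]
  simp only [orbitMin_castSucc, orbitMin_last_s16]

lemma extrCount_insV {n : ℕ} (v : Fin (n + 2)) (σ : Equiv.Perm (Fin (n + 1))) :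
    extrCount (insV (v, σ)) = extrCount σ + if v = 0 ∨ v = Fin.last (n + 1) then 1 else 0 := by
  classical
  unfold extrCount
  rw [aux_split]
  congr 1
  · refine Nat.card_congr (Equiv.subtypeEquivRight fun i => ?_)
    have hl : ¬ Fin.last (n + 1) < i.castSucc := (Fin.castSucc_lt_last i).not_gt
    simp only [Fin.forall_fin_succ', insV_castSucc, Fin.succAbove_lt_succAbove_iff,
      Fin.castSucc_lt_castSucc_iff, hl, Fin.val_castSucc, false_imp_iff, and_true]
  · refine if_congr ?_ rfl rfl
    obtain ⟨a, ha⟩ := (insV (v, σ)).surjective 0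
    obtain ⟨b, hb⟩ := (insV (v, σ)).surjective (Fin.last (n + 1))
    rw [insV_last]
    constructor
    · rintro ⟨-, h | h⟩
      · left
        rcases Fin.lt_or_eq_of_le (Fin.le_last a) with h1 | h1
        · have := h a h1
          rw [ha] at this
          exact absurd this (Fin.not_lt_zero _)
        · rw [h1, insV_last] at ha
          exact ha
      · right
        rcases Fin.lt_or_eq_of_le (Fin.le_last b) with h1 | h1
        · have := h b h1
          rw [hb] at this
          exact absurd this (Fin.le_last _).not_gt
        · rw [h1, insV_last] at hb
          exact hb
    · intro h
      refine ⟨by simp, ?_⟩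
      have hne : ∀ j, j < Fin.last (n + 1) → insV (v, σ) j ≠ v := by
        intro j hj he
        rw [← insV_last v σ] at he
        exact hj.ne ((insV (insV (v, σ) (Fin.last (n + 1)), σ)).injective (by
          simpa [insV_last] using he))
      rcases h with h | h
      · left
        intro j hj
        have := hne j hj
        rw [h] at this ⊢
        exact Fin.pos_iff_ne_zero.2 this
      · right
        intro j hj
        have := hne j hj
        rw [h] at this ⊢
        exact Fin.lt_last_iff_ne_last.2 this

lemma card_a (m : ℕ) : Nat.card {v : Fin (m + 1) // v = Fin.last m} = 1 := by simp

lemma card_b (m : ℕ) : Nat.card {v : Fin (m + 1) // ¬ v = Fin.last m} = m := by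
  rw [Nat.card_eq_fintype_card, Fintype.card_subtype_compl]
  simp

lemma card_c (m : ℕ) : Nat.card {v : Fin (m + 2) // v = 0 ∨ v = Fin.last (m + 1)} = 2 := by
  rw [Nat.card_eq_fintype_card, Fintype.card_subtype, Finset.filter_or]
  rw [Finset.filter_eq' , Finset.filter_eq', if_pos (Finset.mem_univ _),
    if_pos (Finset.mem_univ _)]
  have h : (0 : Fin (m + 2)) ≠ Fin.last (m + 1) := by simp [Fin.ext_iff]
  exact Finset.card_pair h

lemma card_d (m : ℕ) : Nat.card {v : Fin (m + 2) // ¬ (v = 0 ∨ v = Fin.last (m + 1))} = m := by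
  have := card_c m
  rw [Nat.card_eq_fintype_card] at this ⊢
  rw [Fintype.card_subtype_compl, this]
  simp

theorem main_aux (m : ℕ) : ∀ k : ℕ,
    Nat.card {π : Equiv.Perm (Fin (m + 1)) // extrCount π = k} =
      2 ^ k * Nat.card {π : Equiv.Perm (Fin m) // cycleCount π = k} := by
  induction m with
  | zero =>
    intro k
    have h1 : ∀ π : Equiv.Perm (Fin (0 + 1)), extrCount π = 0 := by
      intro π
      simp [extrCount]
    have h2 : ∀ π : Equiv.Perm (Fin 0), cycleCount π = 0 := by
      intro π
      simp [cycleCount]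
    simp only [h1, h2]
    cases k with
    | zero => simp
    | succ k => simp
  | succ m ih =>
    intro k
    cases k with
    | zero =>
      rw [aux_count_zero insV insV_bij extrCount extrCount _ extrCount_insV,
        aux_count_zero insC insC_bij cycleCount cycleCount _ cycleCount_insC,
        card_b, card_d, ih]
      ring
    | succ k =>
      rw [aux_count_s16 insV insV_bij extrCount extrCount _ extrCount_insV,
        aux_count_s16 insC insC_bij cycleCount cycleCount _ cycleCount_insC,
        card_a, card_b, card_c, card_d, ih, ih]
      ring

/-- permutations of `[n]` with `k` extreme elements are counted by
`2^k c(n-1, k)`. -/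
theorem stmt16 (n k : ℕ) (hn : 2 ≤ n) (hk : 1 ≤ k) (hkn : k + 1 ≤ n) :
    Nat.card {π : Equiv.Perm (Fin n) // extrCount π = k} =
      2 ^ k * Nat.card {π : Equiv.Perm (Fin (n - 1)) // cycleCount π = k} := by
  obtain ⟨m, rfl⟩ : ∃ m, n = m + 1 := ⟨n - 1, by omega⟩
  exact main_aux m k
end

section
/- For every n ≥ 1 and every k with 1 ≤ k ≤ n, the total number, summed over all permutations π of [n], of up-down cycles of π of length k equals n! · E_{k-1} / k!; equivalently, the expected number of up-down cycles of length k in a uniformly random permutation of [n] is E_{k-1}/k!. -/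
open Equiv Finset

def GoodW {k n : ℕ} (f : Fin (k+1) → Fin n) : Prop :=
  (∀ i, f 0 ≤ f i) ∧ ∀ i j : Fin (k+1), (j : ℕ) = (i : ℕ) + 1 →
    (((i : ℕ) % 2 = 0 → f i < f j) ∧ ((i : ℕ) % 2 = 1 → f j < f i))

lemma card_ext {m n : ℕ} (f : Fin (m+1) ↪ Fin n) :
    Nat.card {π : Perm (Fin n) // ∀ i, π (f i) = f (finRotate (m+1) i)} = (n - (m+1)).factorial := by
  classical
  set τ : Perm (Fin n) := (finRotate (m+1)).viaFintypeEmbedding f with hτ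
  have hτf : ∀ i, τ (f i) = f (finRotate (m+1) i) := fun i =>
    Equiv.Perm.viaFintypeEmbedding_apply_image _ _ _
  let e : {π : Perm (Fin n) // ∀ i, π (f i) = f (finRotate (m+1) i)} ≃
      {g : Perm (Fin n) // ∀ a, ¬ (a ∉ Set.range f) → g a = a} :=
    (Equiv.mulLeft τ⁻¹).subtypeEquiv (by
      intro π
      simp only [Equiv.coe_mulLeft, not_not, Set.mem_range, forall_exists_index,
        forall_apply_eq_imp_iff, Perm.mul_apply, Perm.inv_eq_iff_eq]
      simp only [hτf])
  rw [Nat.card_congr (e.trans (Equiv.Perm.subtypeEquivSubtypePerm _).symm), Nat.card_eq_fintype_card,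
    Fintype.card_perm]
  congr 1
  have := Fintype.card_subtype_compl (fun a => a ∈ Set.range f)
  simp only [this, Fintype.card_fin]
  congr 1
  have h := Fintype.card_congr (Equiv.ofInjective f f.injective)
  simp only [Fintype.card_fin] at h
  refine Eq.trans ?_ h.symm
  apply Fintype.card_congr'
  rfl

lemma card_goodPerm (m : ℕ) :
    Nat.card {σ : Perm (Fin (m+1)) // GoodW σ} = eulerE m := by
  unfold eulerE
  symm
  refine Nat.card_eq_of_bijective (f := fun τ : {π : Perm (Fin m) // IsUpDownPerm π} =>
    (⟨Equiv.Perm.decomposeFin.symm (0, τ.1.trans Fin.revPerm), ?_⟩ : {σ : Perm (Fin (m+1)) // GoodW σ})) ⟨?_, ?_⟩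
  · constructor
    · intro i; simp
    · intro i j hij
      obtain ⟨j, rfl⟩ := Fin.exists_succ_eq.2 (show j ≠ 0 by rintro rfl; simp at hij)
      induction i using Fin.cases with
      | zero => simp
      | succ i =>
        have := τ.2 i j (by simpa using hij)
        simp only [Perm.decomposeFin_symm_apply_succ, swap_self, Equiv.refl_apply,
          Fin.succ_lt_succ_iff, Equiv.trans_apply, Fin.revPerm_apply, Fin.rev_lt_rev, Fin.val_succ]
        exact ⟨fun h => this.2 (by omega), fun h => this.1 (by omega)⟩
  · intro a b h
    have h := congrArg Prod.snd (Equiv.Perm.decomposeFin.symm.injective (congrArg Subtype.val h))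
    ext i
    have := congrArg (fun g : Perm (Fin m) => g i) h
    simp at this
    simp [this]
  · rintro ⟨σ, h0, h⟩
    obtain ⟨⟨p, e⟩, rfl⟩ := Equiv.Perm.decomposeFin.symm.surjective σ
    have hp : p = 0 := by
      obtain ⟨i, hi⟩ := (Equiv.Perm.decomposeFin.symm (p, e)).surjective 0
      have := h0 i
      rw [hi] at this
      simpa using this
    subst hp
    refine ⟨⟨e.trans Fin.revPerm, ?_⟩, ?_⟩
    · intro i j hij
      have := h i.succ j.succ (by simpa using hij)
      simp only [Perm.decomposeFin_symm_apply_succ, swap_self, Equiv.refl_apply,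
          Fin.succ_lt_succ_iff, Fin.val_succ] at this
      simp only [Equiv.trans_apply, Fin.revPerm_apply, Fin.rev_lt_rev]
      exact ⟨fun h => this.2 (by omega), fun h => this.1 (by omega)⟩
    · have he : (e.trans Fin.revPerm).trans Fin.revPerm = e := by ext i; simp
      exact Subtype.ext (congrArg (fun g => Equiv.Perm.decomposeFin.symm (0, g)) he)

lemma card_goodEmb (m n : ℕ) :
    Nat.card {f : Fin (m+1) ↪ Fin n // GoodW f} = n.choose (m+1) * eulerE m := by
  classical
  have h1 : Nat.card (Fin (m+1) ↪o Fin n) = n.choose (m+1) := by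
    rw [Nat.card_congr Set.powersetCard.ofFinEmbEquiv, Set.powersetCard.card]
    simp
  rw [← card_goodPerm, ← h1, ← Nat.card_prod]
  symm
  refine Nat.card_eq_of_bijective
    (f := fun p : (Fin (m+1) ↪o Fin n) × {σ : Perm (Fin (m+1)) // GoodW σ} =>
    (⟨p.2.1.toEmbedding.trans p.1.toEmbedding, ?_⟩ : {f : Fin (m+1) ↪ Fin n // GoodW f})) ⟨?_, ?_⟩
  · have := p.2.2
    simpa [GoodW] using this
  · rintro ⟨o, σ, hσ⟩ ⟨o', σ', hσ'⟩ h
    simp only [Subtype.mk.injEq] at h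
    have h' : ∀ i, o (σ i) = o' (σ' i) := fun i => DFunLike.congr_fun h i
    have ho : o = o' := by
      rw [← OrderEmbedding.range_inj]
      ext x
      constructor
      · rintro ⟨i, rfl⟩
        exact ⟨σ' (σ.symm i), by rw [← h']; simp⟩
      · rintro ⟨i, rfl⟩
        exact ⟨σ (σ'.symm i), by rw [h']; simp⟩
    subst ho
    have : σ = σ' := by
      ext i
      rw [o.injective (h' i)]
    subst this
    rfl
  · rintro ⟨f, hf⟩
    have hc : (univ.map f).card = m+1 := by simp
    set o := (univ.map f).orderEmbOfFin hc with ho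
    have hr : Set.range o = Set.range f := by
      rw [ho, Finset.range_orderEmbOfFin]; simp
    have hex : ∀ i, ∃ j, o j = f i := fun i => by
      have : f i ∈ Set.range o := by rw [hr]; exact ⟨i, rfl⟩
      exact this
    choose g hg using hex
    have hgi : Function.Injective g := fun a b hab => f.injective (by rw [← hg, ← hg, hab])
    let σ : Perm (Fin (m+1)) := Equiv.ofBijective g (Finite.injective_iff_bijective.1 hgi)
    have hσ : ∀ i, o (σ i) = f i := hg
    refine ⟨⟨o, σ, ?_⟩, ?_⟩
    · unfold GoodW at hf ⊢
      simpa only [← hσ, OrderEmbedding.lt_iff_lt, OrderEmbedding.le_iff_le] using hf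
    · apply Subtype.ext
      ext i
      exact congrArg _ (hσ i)

lemma pow_f {m n : ℕ} (π : Perm (Fin n)) (f : Fin (m+1) ↪ Fin n)
    (h : ∀ i, π (f i) = f (finRotate (m+1) i)) :
    ∀ (i : ℕ) (hi : i < m+1), (π ^ i) (f 0) = f ⟨i, hi⟩ := by
  intro i
  induction i with
  | zero => intro _; rfl
  | succ i ih =>
    intro hi
    rw [pow_succ', Perm.mul_apply, ih (by omega), h, finRotate_of_lt (by omega)]

lemma per_f {m n : ℕ} (π : Perm (Fin n)) (f : Fin (m+1) ↪ Fin n)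
    (h : ∀ i, π (f i) = f (finRotate (m+1) i)) : cycLen π (f 0) = m + 1 := by
  have hp : (π ^ (m+1)) (f 0) = f 0 := by
    rw [pow_succ', Perm.mul_apply, pow_f π f h m (by omega), h, finRotate_last']
    rfl
  have hper : Function.IsPeriodicPt π (m+1) (f 0) := by
    rw [← Perm.iterate_eq_pow] at hp; exact hp
  refine le_antisymm (hper.minimalPeriod_le (by omega)) ?_
  by_contra! hlt
  have hpos := hper.minimalPeriod_pos (by omega)
  have h2 := Function.isPeriodicPt_minimalPeriod π (f 0)
  unfold cycLen at hlt
  unfold Function.IsPeriodicPt Function.IsFixedPt at h2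
  rw [Perm.iterate_eq_pow, pow_f π f h _ hlt] at h2
  have := congrArg Fin.val (f.injective h2)
  simp at this
  omega

lemma good_iff {m n : ℕ} (π : Perm (Fin n)) (f : Fin (m+1) ↪ Fin n)
    (h : ∀ i, π (f i) = f (finRotate (m+1) i)) :
    (IsOrbitMin π (f 0) ∧ CycleUpDownAt π (f 0)) ↔ GoodW f := by
  have hper := per_f π f h
  constructor
  · rintro ⟨h1, h2⟩
    refine ⟨fun i => ?_, fun i j hij => ?_⟩
    · have := h1 i
      rwa [pow_f π f h i i.2] at this
    · have := h2 i (by rw [hper, ← hij]; exact j.2)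
      rw [pow_f π f h i i.2, pow_f π f h (i+1) (by rw [← hij]; exact j.2)] at this
      have hj : j = ⟨(i:ℕ)+1, by rw [← hij]; exact j.2⟩ := Fin.ext hij
      rw [hj]; exact this
  · rintro ⟨h1, h2⟩
    refine ⟨fun i => ?_, fun i hi => ?_⟩
    · have hm : (π ^ i) (f 0) = (π ^ (i % (m+1))) (f 0) := by
        have := Function.iterate_mod_minimalPeriod_eq (f := π) (x := f 0) (n := i)
        unfold cycLen at hper
        rw [hper] at this
        rw [← Perm.iterate_eq_pow, ← Perm.iterate_eq_pow, this]
      rw [hm, pow_f π f h _ (Nat.mod_lt _ (by omega))]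
      exact h1 _
    · rw [hper] at hi
      rw [pow_f π f h i (by omega), pow_f π f h (i+1) hi]
      exact h2 ⟨i, by omega⟩ ⟨i+1, hi⟩ rfl

lemma exists_f {m n : ℕ} (π : Perm (Fin n)) (x : Fin n) (hx : cycLen π x = m + 1) :
    ∃ f : Fin (m+1) ↪ Fin n, f 0 = x ∧ ∀ i, π (f i) = f (finRotate (m+1) i) := by
  unfold cycLen at hx
  have hinj : Function.Injective (fun i : Fin (m+1) => (π ^ (i:ℕ)) x) := by
    intro i j hij
    have := (Function.iterate_injOn_Iio_minimalPeriod (f := π) (x := x))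
      (show (i:ℕ) ∈ _ by rw [hx]; exact i.2) (show (j:ℕ) ∈ _ by rw [hx]; exact j.2)
      (by simpa only [Perm.iterate_eq_pow] using hij)
    exact Fin.ext this
  refine ⟨⟨fun i => (π ^ (i:ℕ)) x, hinj⟩, rfl, ?_⟩
  · intro i
    simp only [Function.Embedding.coeFn_mk]
    rw [← Perm.mul_apply, ← pow_succ']
    rcases Nat.lt_or_ge (i:ℕ) m with hi | hi
    · have : i = ⟨i, by omega⟩ := rfl
      rw [this, finRotate_of_lt hi]
    · have : i = Fin.last m := Fin.ext (by simp; omega)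
      subst this
      have h2 := Function.isPeriodicPt_minimalPeriod π x
      rw [hx] at h2
      unfold Function.IsPeriodicPt Function.IsFixedPt at h2
      rw [Perm.iterate_eq_pow] at h2
      simpa using h2

lemma total (m n : ℕ) :
    ∑ π : Perm (Fin n), udLenCount π (m+1) =
      n.choose (m+1) * eulerE m * (n - (m+1)).factorial := by
  classical
  unfold udLenCount
  rw [← Nat.card_sigma, ← card_goodEmb]
  have : Nat.card (Σ f : {f : Fin (m+1) ↪ Fin n // GoodW f},
      {π : Perm (Fin n) // ∀ i, π (f.1 i) = f.1 (finRotate (m+1) i)}) =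
      Nat.card {f : Fin (m+1) ↪ Fin n // GoodW f} * (n - (m+1)).factorial := by
    rw [Nat.card_sigma]
    simp only [card_ext]
    simp
  rw [← this]
  symm
  refine Nat.card_eq_of_bijective
    (f := fun p : (Σ f : {f : Fin (m+1) ↪ Fin n // GoodW f},
      {π : Perm (Fin n) // ∀ i, π (f.1 i) = f.1 (finRotate (m+1) i)}) =>
      (⟨p.2.1, ⟨p.1.1 0, ((good_iff _ _ p.2.2).2 p.1.2).1, per_f _ _ p.2.2,
        ((good_iff _ _ p.2.2).2 p.1.2).2⟩⟩ : Σ π : Perm (Fin n),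
        {x : Fin n // IsOrbitMin π x ∧ cycLen π x = m + 1 ∧ CycleUpDownAt π x})) ⟨?_, ?_⟩
  · rintro ⟨⟨f, hf⟩, π, hπ⟩ ⟨⟨f', hf'⟩, π', hπ'⟩ h
    simp only [Sigma.mk.injEq] at h
    obtain ⟨rfl, h⟩ := h
    have h0 := congrArg Subtype.val (eq_of_heq h)
    simp only at h0
    have : f = f' := by
      ext i
      rw [← pow_f π f hπ i i.2, ← pow_f π f' hπ' i i.2, h0]
    subst this
    rfl
  · rintro ⟨π, x, h1, h2, h3⟩
    obtain ⟨f, rfl, hf⟩ := exists_f π x h2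
    exact ⟨⟨⟨f, (good_iff π f hf).1 ⟨h1, h3⟩⟩, π, hf⟩, rfl⟩

/-- the total number of up-down cycles of length `k` over all
permutations of `[n]` equals `n! · E (k-1) / k!`. -/
theorem stmt17 (n k : ℕ) (hn : 1 ≤ n) (hk : 1 ≤ k) (hkn : k ≤ n) :
    (∑ π : Equiv.Perm (Fin n), (udLenCount π k : ℚ)) =
      (Nat.factorial n : ℚ) * (eulerE (k - 1) : ℚ) / (Nat.factorial k : ℚ) := by
  obtain ⟨m, rfl⟩ : ∃ m, k = m + 1 := ⟨k - 1, by omega⟩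
  rw [← Nat.cast_sum, total, eq_div_iff (by positivity), ← Nat.choose_mul_factorial_mul_factorial hkn]
  simp only [Nat.add_sub_cancel]
  push_cast
  ring
end

section
/- For every n ≥ 1, the sum over all permutations π of [n] of ud(π), the number of up-down cycles of π, equals n! · (E_0/1! + E_1/2! + ⋯ + E_{n-1}/n!); equivalently, the expected number of up-down cycles in a uniformly random permutation of [n] is Σ_{k=1}^{n} E_{k-1}/k!. -/
open Equiv Finset

def Pat {m n : ℕ} (f : Fin (m+1) ↪ Fin n) : Prop :=
  (∀ i, f 0 ≤ f i) ∧ ∀ i j : Fin (m+1), (j : ℕ) = (i : ℕ) + 1 →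
    (((i : ℕ) % 2 = 0 → f i < f j) ∧ ((i : ℕ) % 2 = 1 → f j < f i))

def Compat {m n : ℕ} (π : Equiv.Perm (Fin n)) (f : Fin (m+1) ↪ Fin n) : Prop :=
  ∀ i, π (f i) = f (finRotate (m+1) i)

theorem card_compat {m n : ℕ} (f : Fin (m+1) ↪ Fin n) :
    Nat.card {π : Equiv.Perm (Fin n) // Compat π f} = (n - (m+1)).factorial := by
  classical
  let c : Equiv.Perm (Fin n) := Equiv.Perm.viaFintypeEmbedding (finRotate (m+1)) f
  have hc : ∀ i, c (f i) = f (finRotate (m+1) i) := fun i =>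
    Equiv.Perm.viaFintypeEmbedding_apply_image _ _ _
  have e1 : {π : Equiv.Perm (Fin n) // Compat π f} ≃
      {g : Equiv.Perm (Fin n) // ∀ a, ¬ (a ∉ Set.range f) → g a = a} := by
    refine (Equiv.mulLeft c⁻¹).subtypeEquiv ?_
    intro π
    constructor
    · intro h a ha
      simp only [not_not] at ha
      obtain ⟨i, rfl⟩ := ha
      simp only [Equiv.coe_mulLeft, Equiv.Perm.mul_apply]
      rw [h i, ← hc i]; simp
    · intro h i
      have := h (f i) (by simp)
      simp only [Equiv.coe_mulLeft, Equiv.Perm.mul_apply] at this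
      rw [← hc i]
      rw [Equiv.Perm.inv_eq_iff_eq] at this
      exact this
  rw [Nat.card_congr e1, ← Nat.card_congr (Equiv.Perm.subtypeEquivSubtypePerm (fun a => a ∉ Set.range f)),
    Nat.card_eq_fintype_card, Fintype.card_perm]
  congr 1
  rw [Fintype.card_subtype_compl, Fintype.card_fin]
  congr 1
  have := Set.card_range_of_injective f.injective
  rw [Fintype.card_fin] at this
  refine Eq.trans ?_ this
  exact Fintype.card_congr (Equiv.refl _)

theorem card_pat_perm (m : ℕ) :
    Nat.card {τ : Equiv.Perm (Fin (m+1)) // Pat τ.toEmbedding} = eulerE m := by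
  unfold eulerE
  symm
  let F : Equiv.Perm (Fin m) → Equiv.Perm (Fin (m+1)) :=
    fun e => Equiv.Perm.decomposeFin.symm (0, e.trans Fin.revPerm)
  have F0 : ∀ e, F e 0 = 0 := fun e => by simp [F]
  have Fs : ∀ e i, F e i.succ = (Fin.rev (e i)).succ := fun e i => by
    simp [F]
  have hF : ∀ e, IsUpDownPerm e ↔ Pat (F e).toEmbedding := by
    intro e
    constructor
    · intro h
      refine ⟨fun i => by simp [F0], ?_⟩
      intro i j hij
      simp only [Equiv.coe_toEmbedding]
      obtain ⟨j, rfl⟩ := Fin.exists_succ_eq.2 (show j ≠ 0 by rintro rfl; simp at hij)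
      rcases Fin.eq_zero_or_eq_succ i with rfl | ⟨i, rfl⟩
      · rw [F0, Fs]; simp
      · have := h i j (by simpa using hij)
        rw [Fs, Fs]
        simp only [Fin.succ_lt_succ_iff, Fin.rev_lt_rev, Fin.val_succ]
        exact ⟨fun h => this.2 (by omega), fun h => this.1 (by omega)⟩
    · rintro ⟨-, h⟩ i j hij
      have := h i.succ j.succ (by simpa using hij)
      simp only [Equiv.coe_toEmbedding, Fs, Fin.succ_lt_succ_iff, Fin.rev_lt_rev, Fin.val_succ] at this
      exact ⟨fun h => this.2 (by omega), fun h => this.1 (by omega)⟩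
  refine Nat.card_congr (Equiv.ofBijective
    (fun e : {π : Equiv.Perm (Fin m) // IsUpDownPerm π} => 
      (⟨F e.1, (hF _).1 e.2⟩ : {τ : Equiv.Perm (Fin (m+1)) // Pat τ.toEmbedding})) ⟨?_, ?_⟩)
  · rintro ⟨a, ha⟩ ⟨b, hb⟩ h
    simp only [Subtype.mk.injEq] at h ⊢
    ext i
    have := congrArg (fun t => t i.succ) h
    simp only [Fs] at this
    have h3 : a i = b i := by simpa using this
    rw [h3]
  · rintro ⟨τ, hτ⟩
    have h0 : τ 0 = 0 := by
      have := hτ.1 (τ.symm 0)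
      simpa using this
    obtain ⟨⟨p, e⟩, rfl⟩ := Equiv.Perm.decomposeFin.symm.surjective τ
    have hp : p = 0 := by simpa using h0
    subst hp
    have : F (e.trans Fin.revPerm) = Equiv.Perm.decomposeFin.symm (0, e) := by
      simp only [F]
      congr 2
      ext i; simp
    exact ⟨⟨e.trans Fin.revPerm, (hF _).2 (this ▸ hτ)⟩, Subtype.ext this⟩

theorem card_pat (m n : ℕ) :
    Nat.card {f : Fin (m+1) ↪ Fin n // Pat f} = n.choose (m+1) * eulerE m := by
  classical
  rw [← card_pat_perm]
  let G : (powersetCard (m+1) (univ : Finset (Fin n))) × Equiv.Perm (Fin (m+1)) →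
      (Fin (m+1) ↪ Fin n) := fun p =>
    p.2.toEmbedding.trans (p.1.1.orderEmbOfFin (mem_powersetCard.1 p.1.2).2).toEmbedding
  have hG : Function.Injective G := by
    rintro ⟨⟨S, hS⟩, τ⟩ ⟨⟨T, hT⟩, σ⟩ h
    have key : ∀ i, S.orderEmbOfFin (mem_powersetCard.1 hS).2 (τ i) =
        T.orderEmbOfFin (mem_powersetCard.1 hT).2 (σ i) := fun i => DFunLike.congr_fun h i
    have hST : S = T := by
      apply Finset.eq_of_subset_of_card_le
      · intro x hx
        rw [← Finset.mem_coe, ← Finset.range_orderEmbOfFin S (mem_powersetCard.1 hS).2] at hx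
        obtain ⟨i, rfl⟩ := hx
        have := key (τ.symm i)
        rw [Equiv.apply_symm_apply] at this
        rw [this]
        exact Finset.orderEmbOfFin_mem _ _ _
      · rw [(mem_powersetCard.1 hS).2, (mem_powersetCard.1 hT).2]
    subst hST
    have : τ = σ := by
      ext i
      rw [(S.orderEmbOfFin _).injective (key i)]
    rw [this]
  have hB : Function.Bijective G := by
    rw [Fintype.bijective_iff_injective_and_card]
    refine ⟨hG, ?_⟩
    rw [Fintype.card_prod, Fintype.card_embedding_eq, Fintype.card_perm, Fintype.card_coe,
      card_powersetCard]
    rw [Nat.descFactorial_eq_factorial_mul_choose, mul_comm, Finset.card_univ]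
    simp only [Fintype.card_fin]
  have hP : ∀ p, Pat p.2.toEmbedding ↔ Pat (G p) := by
    intro p
    simp [Pat, G]
  have e1 : {p : (powersetCard (m+1) (univ : Finset (Fin n))) × Equiv.Perm (Fin (m+1)) //
      Pat p.2.toEmbedding} ≃ {f : Fin (m+1) ↪ Fin n // Pat f} :=
    (Equiv.ofBijective G hB).subtypeEquiv hP
  have e2 : {p : (powersetCard (m+1) (univ : Finset (Fin n))) × Equiv.Perm (Fin (m+1)) //
      Pat p.2.toEmbedding} ≃ (powersetCard (m+1) (univ : Finset (Fin n))) ×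
        {τ : Equiv.Perm (Fin (m+1)) // Pat τ.toEmbedding} :=
    { toFun := fun p => (p.1.1, ⟨p.1.2, p.2⟩)
      invFun := fun q => ⟨(q.1, q.2.1), q.2.2⟩
      left_inv := fun _ => rfl
      right_inv := fun _ => rfl }
  rw [← Nat.card_congr e1, Nat.card_congr e2, Nat.card_prod]
  congr 1
  rw [Nat.card_eq_fintype_card, Fintype.card_coe, card_powersetCard]
  simp

theorem compat_pow {m n : ℕ} {π : Equiv.Perm (Fin n)} {f : Fin (m+1) ↪ Fin n} (h : Compat π f)
    (j : ℕ) : (π ^ j) (f 0) = f ⟨j % (m+1), Nat.mod_lt _ (by omega)⟩ := by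
  induction j with
  | zero => simp
  | succ j ih =>
    rw [pow_succ', Equiv.Perm.mul_apply, ih, h]
    congr 1
    rw [finRotate_apply]
    ext
    simp [Fin.val_add]

theorem compat_cycLen {m n : ℕ} {π : Equiv.Perm (Fin n)} {f : Fin (m+1) ↪ Fin n}
    (h : Compat π f) : cycLen π (f 0) = m + 1 := by
  unfold cycLen
  have hp : Function.IsPeriodicPt π (m+1) (f 0) := by
    unfold Function.IsPeriodicPt Function.IsFixedPt
    rw [← Equiv.Perm.coe_pow, compat_pow h]
    congr 1
    ext; simp
  refine Nat.dvd_antisymm hp.minimalPeriod_dvd ?_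
  have h2 := Function.isPeriodicPt_minimalPeriod π (f 0)
  unfold Function.IsPeriodicPt Function.IsFixedPt at h2
  rw [← Equiv.Perm.coe_pow, compat_pow h] at h2
  have := congrArg Fin.val (f.injective h2)
  exact Nat.dvd_of_mod_eq_zero (by simpa using this)

theorem compat_pat {m n : ℕ} {π : Equiv.Perm (Fin n)} {f : Fin (m+1) ↪ Fin n}
    (h : Compat π f) : Pat f ↔ IsOrbitMin π (f 0) ∧ CycleUpDownAt π (f 0) := by
  unfold IsOrbitMin CycleUpDownAt
  rw [compat_cycLen h]
  have hv : ∀ i : Fin (m+1), f i = (π ^ (i:ℕ)) (f 0) := fun i => by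
    rw [compat_pow h]; congr 1; ext; simp [Nat.mod_eq_of_lt i.2]
  constructor
  · rintro ⟨h1, h2⟩
    refine ⟨fun k => ?_, fun i hi => ?_⟩
    · rw [compat_pow h]; exact h1 _
    · have := h2 ⟨i, by omega⟩ ⟨i+1, hi⟩ rfl
      rw [hv ⟨i, _⟩, hv ⟨i+1, _⟩] at this
      exact this
  · rintro ⟨h1, h2⟩
    refine ⟨fun i => ?_, fun i j hij => ?_⟩
    · rw [hv i]; exact h1 _
    · have := h2 i (by omega)
      rw [hv i, hv j, hij]
      exact this

theorem card_fib {m n : ℕ} (π : Equiv.Perm (Fin n)) :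
    udLenCount π (m+1) = Nat.card {f : Fin (m+1) ↪ Fin n // Pat f ∧ Compat π f} := by
  unfold udLenCount
  symm
  refine Nat.card_congr (Equiv.ofBijective
    (fun f : {f : Fin (m+1) ↪ Fin n // Pat f ∧ Compat π f} => 
      (⟨f.1 0, ((compat_pat f.2.2).1 f.2.1).1, compat_cycLen f.2.2,
        ((compat_pat f.2.2).1 f.2.1).2⟩ : 
        {x : Fin n // IsOrbitMin π x ∧ cycLen π x = m+1 ∧ CycleUpDownAt π x})) ⟨?_, ?_⟩)
  · rintro ⟨f, hf⟩ ⟨g, hg⟩ h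
    simp only [Subtype.mk.injEq] at h ⊢
    ext i
    have h1 := compat_pow hf.2 i
    have h2 := compat_pow hg.2 i
    have e : (⟨(i:ℕ) % (m+1), Nat.mod_lt _ (by omega)⟩ : Fin (m+1)) = i := by
      ext; simp [Nat.mod_eq_of_lt i.2]
    rw [e] at h1 h2
    rw [← h1, ← h2, h]
  · rintro ⟨x, h1, h2, h3⟩
    let f : Fin (m+1) ↪ Fin n := ⟨fun i => (π ^ (i:ℕ)) x, by
      intro i j hij
      simp only [Equiv.Perm.coe_pow] at hij
      ext
      unfold cycLen at h2
      exact (Function.iterate_eq_iterate_iff_of_lt_minimalPeriod (by omega) (by omega)).1 hij⟩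
    have hc : Compat π f := by
      intro i
      change π ((π ^ (i:ℕ)) x) = (π ^ ((finRotate (m+1) i : Fin (m+1)) : ℕ)) x
      have : ((finRotate (m+1) i : Fin (m+1)) : ℕ) = (i + 1) % (m+1) := by
        rw [finRotate_apply]; simp [Fin.val_add]
      rw [this, ← Equiv.Perm.mul_apply, ← pow_succ', Equiv.Perm.coe_pow, Equiv.Perm.coe_pow]
      unfold cycLen at h2
      have h4 := Function.iterate_mod_minimalPeriod_eq (f := π) (x := x) (n := (i:ℕ) + 1)
      rw [h2] at h4
      exact h4.symm
    have f0 : f 0 = x := by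
      change (π ^ ((0 : Fin (m+1)) : ℕ)) x = x
      simp
    exact ⟨⟨f, (compat_pat hc).2 (by rw [f0]; exact ⟨h1, h3⟩), hc⟩, Subtype.ext f0⟩

theorem sum_len (m n : ℕ) : ∑ π : Equiv.Perm (Fin n), udLenCount π (m+1) =
    n.choose (m+1) * eulerE m * (n - (m+1)).factorial := by
  classical
  simp_rw [card_fib]
  rw [← Nat.card_sigma]
  have e : (Σ π : Equiv.Perm (Fin n), {f : Fin (m+1) ↪ Fin n // Pat f ∧ Compat π f}) ≃
      (Σ f : {f : Fin (m+1) ↪ Fin n // Pat f}, {π : Equiv.Perm (Fin n) // Compat π f.1}) :=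
    { toFun := fun p => ⟨⟨p.2.1, p.2.2.1⟩, ⟨p.1, p.2.2.2⟩⟩
      invFun := fun p => ⟨p.2.1, ⟨p.1.1, p.1.2, p.2.2⟩⟩
      left_inv := fun _ => rfl
      right_inv := fun _ => rfl }
  rw [Nat.card_congr e, Nat.card_sigma]
  simp_rw [card_compat]
  rw [sum_const, card_univ, ← Nat.card_eq_fintype_card, card_pat, smul_eq_mul]

theorem udCount_eq {n : ℕ} (π : Equiv.Perm (Fin n)) :
    udCount π = ∑ k ∈ Finset.Icc 1 n, udLenCount π k := by
  classical
  unfold udCount udLenCount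
  simp_rw [Nat.card_eq_fintype_card, Fintype.card_subtype]
  rw [Finset.card_eq_sum_card_fiberwise (f := cycLen π) (t := Finset.Icc 1 n)]
  · refine sum_congr rfl fun k _ => ?_
    congr 1
    ext x
    simp only [mem_filter, mem_univ, true_and]
    tauto
  · intro x _
    simp only [coe_Icc, Set.mem_Icc]
    unfold cycLen
    refine ⟨Function.minimalPeriod_pos_of_mem_periodicPts ?_, ?_⟩
    · exact Function.Injective.mem_periodicPts π.injective x
    · simpa using Function.minimalPeriod_le_card (f := π) (x := x)

/-- the total number of up-down cycles over all permutations of `[n]`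
equals `n! · (E 0 / 1! + E 1 / 2! + ⋯ + E (n-1) / n!)`. -/
theorem stmt18 (n : ℕ) (hn : 1 ≤ n) :
    (∑ π : Equiv.Perm (Fin n), (udCount π : ℚ)) =
      (Nat.factorial n : ℚ) *
        ∑ k ∈ Finset.Icc 1 n, (eulerE (k - 1) : ℚ) / (Nat.factorial k : ℚ) := by
  simp_rw [udCount_eq]
  push_cast
  rw [sum_comm, mul_sum]
  refine sum_congr rfl fun k hk => ?_
  rw [mem_Icc] at hk
  obtain ⟨m, rfl⟩ : ∃ m, k = m + 1 := ⟨k - 1, by omega⟩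
  have h := sum_len m n
  have h2 := Nat.choose_mul_factorial_mul_factorial hk.2
  have h3 : ((m+1).factorial : ℚ) ≠ 0 := by exact_mod_cast Nat.factorial_ne_zero _
  rw [← Nat.cast_sum, h, ← h2, Nat.add_sub_cancel]
  push_cast
  field_simp
end

section
/- Let r_n denote the number of permutations of [n] having no up-down cycles. Then for every m ≥ 1, r_{2m-1}/(2m−1)! = r_{2m}/(2m)! = 1/3! − 1/5! + 1/7! − ⋯ + (−1)^m/(2m−1)! (the sum Σ_{i=2}^{m} (−1)^i/(2i−1)!, which is empty, hence 0, for m = 1). -/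
open Equiv Finset

def AltAt {n : ℕ} (π : Equiv.Perm (Fin n)) (x : Fin n) (b : ℕ) : Prop :=
  ∀ i : ℕ, i + 1 < cycLen π x →
    (((i + b) % 2 = 0 → (π ^ i) x < (π ^ (i + 1)) x) ∧
     ((i + b) % 2 = 1 → (π ^ (i + 1)) x < (π ^ i) x))

def Oth {n : ℕ} (π : Equiv.Perm (Fin n)) (a : Fin n) : Prop :=
  ∀ x : Fin n, (∀ k : ℕ, (π ^ k) x ≠ a) → IsOrbitMin π x → ¬ CycleUpDownAt π x

noncomputable def HH {n : ℕ} (a : Fin n) (b : ℕ) : ℕ :=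
  Nat.card {π : Equiv.Perm (Fin n) // AltAt π a b ∧ Oth π a}

noncomputable def KK {n : ℕ} (a : Fin n) : ℕ :=
  Nat.card {π : Equiv.Perm (Fin n) // Oth π a}

def dec {n : ℕ} (a : Fin (n+1)) :
    Equiv.Perm (Fin (n+1)) ≃ Option (Fin n) × Equiv.Perm (Fin n) :=
  (Equiv.permCongr (finSuccEquiv' a)).trans Equiv.Perm.decomposeOption

lemma dec_spec {n : ℕ} (a : Fin (n+1)) (π : Equiv.Perm (Fin (n+1))) :
    π a = (finSuccEquiv' a).symm (dec a π).1 ∧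
    (∀ y, π (a.succAbove y) ≠ a → a.succAbove ((dec a π).2 y) = π (a.succAbove y)) ∧
    (∀ y, π (a.succAbove y) = a → a.succAbove ((dec a π).2 y) = π a) := by
  refine ⟨?_, ?_, ?_⟩
  · simp [dec]
  · intro y hy
    obtain ⟨z, hz⟩ := Fin.exists_succAbove_eq hy
    have h := Equiv.removeNone_some (Equiv.permCongr (finSuccEquiv' a) π) (x := y)
      ⟨z, by simp [← hz]⟩
    have h2 := congrArg (finSuccEquiv' a).symm h
    simpa [dec] using h2
  · intro y hy
    have h := Equiv.removeNone_none (Equiv.permCongr (finSuccEquiv' a) π) (x := y)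
      (by simp [hy])
    have h2 := congrArg (finSuccEquiv' a).symm h
    simpa [dec] using h2

section transfer
variable {n : ℕ} {a : Fin (n+1)} {π : Equiv.Perm (Fin (n+1))} {τ : Equiv.Perm (Fin n)}

lemma pow_succ_app {m : ℕ} (σ : Equiv.Perm (Fin m)) (k : ℕ) (x : Fin m) :
    (σ ^ (k+1)) x = σ ((σ ^ k) x) := by
  rw [pow_succ']; rfl

/-- transfer of cycles avoiding `a` -/
lemma transfer_cycle (y : Fin n) (h : ∀ k, (π ^ k) (a.succAbove y) = a.succAbove ((τ ^ k) y)) :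
    (IsOrbitMin π (a.succAbove y) ↔ IsOrbitMin τ y) ∧
    (CycleUpDownAt π (a.succAbove y) ↔ CycleUpDownAt τ y) := by
  have hp : cycLen π (a.succAbove y) = cycLen τ y := by
    unfold cycLen
    apply Function.minimalPeriod_eq_minimalPeriod_iff.2
    intro k
    unfold Function.IsPeriodicPt Function.IsFixedPt
    rw [← Equiv.Perm.coe_pow, ← Equiv.Perm.coe_pow, h]
    exact Fin.succAbove_right_injective.eq_iff
  constructor
  · unfold IsOrbitMin
    simp [h]
  · unfold CycleUpDownAt
    simp only [h, hp, Fin.succAbove_lt_succAbove_iff]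

lemma pow_avoid (h1 : ∀ y, π (a.succAbove y) ≠ a → a.succAbove (τ y) = π (a.succAbove y))
    (y : Fin n) (h : ∀ k, (π ^ k) (a.succAbove y) ≠ a) (k : ℕ) :
    (π ^ k) (a.succAbove y) = a.succAbove ((τ ^ k) y) := by
  induction k with
  | zero => rfl
  | succ k ih =>
    have h' := h (k+1)
    rw [pow_succ_app, ih] at h'
    rw [pow_succ_app, ih, pow_succ_app, h1 _ h']

lemma oth_none (ha : π a = a)
    (h1 : ∀ y, π (a.succAbove y) ≠ a → a.succAbove (τ y) = π (a.succAbove y)) :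
    Oth π a ↔ ∀ x : Fin n, IsOrbitMin τ x → ¬ CycleUpDownAt τ x := by
  have hk : ∀ k x, (π ^ k) x = a → x = a := by
    intro k x h
    have : (π ^ k) a = a := by
      induction k generalizing x with
      | zero => rfl
      | succ k ih =>
        rw [pow_succ_app, ih ((π ^ k).symm a) (by simp), ha]
    exact (π ^ k).injective (h.trans this.symm)
  have hav : ∀ (y : Fin n) (k : ℕ), (π ^ k) (a.succAbove y) ≠ a :=
    fun y k h => Fin.succAbove_ne a y (hk k _ h)
  constructor
  · intro h y hm hu
    obtain ⟨e1, e2⟩ := transfer_cycle y (pow_avoid h1 y (hav y))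
    exact h (a.succAbove y) (hav y) (e1.2 hm) (e2.2 hu)
  · intro h x hx hm hu
    obtain ⟨y, rfl⟩ := Fin.exists_succAbove_eq (hx 0)
    obtain ⟨e1, e2⟩ := transfer_cycle y (pow_avoid h1 y (hav y))
    exact h y (e1.1 hm) (e2.1 hu)

lemma alt_none (ha : π a = a) (b : ℕ) : AltAt π a b := by
  intro i hi
  have : cycLen π a ≤ 1 := by
    unfold cycLen
    exact Function.IsPeriodicPt.minimalPeriod_le one_pos ha
  omega

lemma oth_some {c : Fin n} (hc : π a = a.succAbove c)
    (h1 : ∀ y, π (a.succAbove y) ≠ a → a.succAbove (τ y) = π (a.succAbove y))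
    (h2 : ∀ y, π (a.succAbove y) = a → a.succAbove (τ y) = π a) :
    Oth π a ↔ Oth τ c := by
  have key : ∀ y, (∀ k, (π ^ k) (a.succAbove y) ≠ a) ↔ (∀ k, (τ ^ k) y ≠ c) := by
    intro y
    constructor
    · intro h k hk
      have e := pow_avoid h1 y h k
      rw [hk, ← hc] at e
      cases k with
      | zero => 
        -- the cycle is finite, so `a` is reached
        obtain ⟨N, hN, hN'⟩ : ∃ N, 0 < N ∧ (π ^ N) a = a := ⟨orderOf π, orderOf_pos π, by simp⟩
        obtain ⟨M, rfl⟩ : ∃ M, N = M + 1 := ⟨N - 1, by omega⟩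
        apply h M
        have e' : a.succAbove y = π a := by simpa using e
        rw [e', ← Equiv.Perm.mul_apply, ← pow_succ, hN']
      | succ k =>
        rw [pow_succ_app] at e
        exact h k (π.injective e)
    · intro h
      have : ∀ k, (π ^ k) (a.succAbove y) = a.succAbove ((τ ^ k) y) := by
        intro k
        induction k with
        | zero => rfl
        | succ k ih =>
          rw [pow_succ_app, ih, pow_succ_app]
          by_cases hh : π (a.succAbove ((τ ^ k) y)) = a
          · exfalso
            have := h2 _ hh
            rw [hc] at this
            apply h (k+1)
            rw [pow_succ_app]
            exact Fin.succAbove_right_injective this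
          · exact (h1 _ hh).symm
      intro k
      rw [this]
      exact Fin.succAbove_ne _ _
  constructor
  · intro h y hy hm hu
    have hy' := (key y).2 hy
    obtain ⟨e1, e2⟩ := transfer_cycle y (pow_avoid h1 y hy')
    exact h (a.succAbove y) hy' (e1.2 hm) (e2.2 hu)
  · intro h x hx hm hu
    obtain ⟨y, rfl⟩ := Fin.exists_succAbove_eq (hx 0)
    obtain ⟨e1, e2⟩ := transfer_cycle y (pow_avoid h1 y hx)
    exact h y ((key y).1 hx) (e1.1 hm) (e2.1 hu)

lemma cycLen_pos {m : ℕ} (σ : Equiv.Perm (Fin m)) (x : Fin m) : 0 < cycLen σ x := by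
  unfold cycLen
  apply Function.IsPeriodicPt.minimalPeriod_pos (orderOf_pos σ)
  unfold Function.IsPeriodicPt Function.IsFixedPt
  rw [← Equiv.Perm.coe_pow]
  simp

lemma alt_some {c : Fin n} (hc : π a = a.succAbove c)
    (h1 : ∀ y, π (a.succAbove y) ≠ a → a.succAbove (τ y) = π (a.succAbove y))
    (h2 : ∀ y, π (a.succAbove y) = a → a.succAbove (τ y) = π a) (b : ℕ) :
    AltAt π a b ↔ ((b % 2 = 0 → a < a.succAbove c) ∧ (b % 2 = 1 → a.succAbove c < a)) ∧
      AltAt τ c (b+1) := by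
  have hpos := cycLen_pos τ c
  have hpw : ∀ i, i < cycLen τ c → (π ^ (i+1)) a = a.succAbove ((τ ^ i) c) := by
    intro i
    induction i with
    | zero => intro _; simpa using hc
    | succ i ih =>
      intro hi
      rw [pow_succ_app, ih (by omega), pow_succ_app]
      by_cases hh : π (a.succAbove ((τ ^ i) c)) = a
      · exfalso
        have := h2 _ hh
        rw [hc] at this
        have h3 : (τ ^ (i+1)) c = c := by
          rw [pow_succ_app]; exact Fin.succAbove_right_injective this
        have h4 : cycLen τ c ≤ i + 1 := by
          apply Function.IsPeriodicPt.minimalPeriod_le (Nat.succ_pos i)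
          unfold Function.IsPeriodicPt Function.IsFixedPt
          rw [← Equiv.Perm.coe_pow]; exact h3
        omega
      · exact (h1 _ hh).symm
  have hlen : cycLen π a = cycLen τ c + 1 := by
    apply le_antisymm
    · apply Function.IsPeriodicPt.minimalPeriod_le (Nat.succ_pos _)
      unfold Function.IsPeriodicPt Function.IsFixedPt
      rw [← Equiv.Perm.coe_pow]
      obtain ⟨m, hm⟩ : ∃ m, cycLen τ c = m + 1 := ⟨cycLen τ c - 1, by omega⟩
      rw [hm, pow_succ_app, hpw m (by omega)]
      by_contra hh
      have h3 := h1 _ hh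
      rw [← pow_succ_app, ← hm] at h3
      have h4 : (τ ^ (cycLen τ c)) c = c := by
        have := Function.isPeriodicPt_minimalPeriod (⇑τ) c
        unfold Function.IsPeriodicPt Function.IsFixedPt at this
        rw [← Equiv.Perm.coe_pow] at this
        exact this
      rw [h4, ← hc] at h3
      exact Fin.succAbove_ne _ _ (π.injective h3).symm
    · by_contra hlt
      have hp := cycLen_pos π a
      obtain ⟨m, hm⟩ : ∃ m, cycLen π a = m + 1 := ⟨cycLen π a - 1, by omega⟩
      have h4 : (π ^ (cycLen π a)) a = a := by
        have := Function.isPeriodicPt_minimalPeriod (⇑π) a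
        unfold Function.IsPeriodicPt Function.IsFixedPt at this
        rw [← Equiv.Perm.coe_pow] at this
        exact this
      rw [hm, hpw m (by omega)] at h4
      exact Fin.succAbove_ne _ _ h4
  constructor
  · intro h
    constructor
    · have := h 0 (by omega)
      simpa [hc] using this
    · intro i hi
      have := h (i+1) (by omega)
      rw [hpw _ hi, hpw i (by omega), Fin.succAbove_lt_succAbove_iff,
        Fin.succAbove_lt_succAbove_iff] at this
      rwa [show i + (b+1) = i + 1 + b by ring]
  · rintro ⟨h0, h⟩ i hi
    cases i with
    | zero => simpa [hc] using h0
    | succ i =>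
      have := h i (by omega)
      rw [hpw (i+1) (by omega), hpw i (by omega), Fin.succAbove_lt_succAbove_iff,
        Fin.succAbove_lt_succAbove_iff]
      rwa [show i + 1 + b = i + (b+1) by ring]
end transfer

lemma card_dec {n : ℕ} (a : Fin (n+1)) (P : Equiv.Perm (Fin (n+1)) → Prop) :
    Nat.card {π // P π} = Nat.card {τ // P ((dec a).symm (none, τ))} +
      ∑ c : Fin n, Nat.card {τ // P ((dec a).symm (some c, τ))} := by
  classical
  have e1 : {π // P π} ≃ (o : Option (Fin n)) × {τ // P ((dec a).symm (o, τ))} :=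
    ((dec a).symm.subtypeEquiv (p := fun x => P ((dec a).symm x)) (q := P)
      (fun _ => Iff.rfl)).symm.trans
      { toFun := fun x => ⟨x.1.1, x.1.2, x.2⟩
        invFun := fun x => ⟨(x.1, x.2.1), x.2.2⟩
        left_inv := fun _ => rfl
        right_inv := fun _ => rfl }
  rw [Nat.card_congr e1, Nat.card_sigma, Fintype.sum_option]

lemma dec_none {n : ℕ} (a : Fin (n+1)) (τ : Equiv.Perm (Fin n)) :
    ((dec a).symm (none, τ)) a = a ∧
    (∀ y, ((dec a).symm (none, τ)) (a.succAbove y) ≠ a →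
      a.succAbove (τ y) = ((dec a).symm (none, τ)) (a.succAbove y)) := by
  have := dec_spec a ((dec a).symm (none, τ))
  simp only [Equiv.apply_symm_apply, finSuccEquiv'_symm_none] at this
  exact ⟨this.1, this.2.1⟩

lemma dec_some {n : ℕ} (a : Fin (n+1)) (c : Fin n) (τ : Equiv.Perm (Fin n)) :
    ((dec a).symm (some c, τ)) a = a.succAbove c ∧
    (∀ y, ((dec a).symm (some c, τ)) (a.succAbove y) ≠ a →
      a.succAbove (τ y) = ((dec a).symm (some c, τ)) (a.succAbove y)) ∧
    (∀ y, ((dec a).symm (some c, τ)) (a.succAbove y) = a →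
      a.succAbove (τ y) = ((dec a).symm (some c, τ)) a) := by
  have := dec_spec a ((dec a).symm (some c, τ))
  simp only [Equiv.apply_symm_apply, finSuccEquiv'_symm_some] at this
  exact this

lemma KK_rec {n : ℕ} (a : Fin (n+1)) :
    KK a = noUDCyclesCount n + ∑ c : Fin n, KK c := by
  unfold KK
  rw [card_dec a]
  congr 1
  · unfold noUDCyclesCount
    apply Nat.card_congr
    apply Equiv.subtypeEquivRight
    intro τ
    obtain ⟨h0, h1⟩ := dec_none a τ
    exact oth_none h0 h1
  · refine Finset.sum_congr rfl fun c _ => ?_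
    apply Nat.card_congr
    apply Equiv.subtypeEquivRight
    intro τ
    obtain ⟨h0, h1, h2⟩ := dec_some a c τ
    exact oth_some h0 h1 h2

open Classical in
lemma HH_rec {n : ℕ} (a : Fin (n+1)) (b : ℕ) :
    HH a b = noUDCyclesCount n + ∑ c : Fin n,
      if ((b % 2 = 0 → a < a.succAbove c) ∧ (b % 2 = 1 → a.succAbove c < a))
        then HH c (b+1) else 0 := by
  unfold HH
  rw [card_dec a]
  congr 1
  · unfold noUDCyclesCount
    apply Nat.card_congr
    apply Equiv.subtypeEquivRight
    intro τ
    obtain ⟨h0, h1⟩ := dec_none a τ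
    rw [oth_none h0 h1]
    exact and_iff_right (alt_none h0 b)
  · refine Finset.sum_congr rfl fun c _ => ?_
    split_ifs with hb
    · apply Nat.card_congr
      apply Equiv.subtypeEquivRight
      intro τ
      obtain ⟨h0, h1, h2⟩ := dec_some a c τ
      rw [oth_some h0 h1 h2, alt_some h0 h1 h2]
      tauto
    · rw [Nat.card_eq_zero]
      left
      constructor
      rintro ⟨τ, h, _⟩
      obtain ⟨h0, h1, h2⟩ := dec_some a c τ
      rw [alt_some h0 h1 h2] at h
      exact hb h.1

lemma r_rec (n : ℕ) :
    noUDCyclesCount (n+1) + HH (0 : Fin (n+1)) 0 = KK (0 : Fin (n+1)) := by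
  classical
  unfold noUDCyclesCount HH KK
  have h : ∀ π : Equiv.Perm (Fin (n+1)),
      (∀ x, IsOrbitMin π x → ¬ CycleUpDownAt π x) ↔ (¬ AltAt π 0 0 ∧ Oth π 0) := by
    intro π
    constructor
    · intro h
      exact ⟨h 0 (fun k => Fin.zero_le _), fun x _ => h x⟩
    · rintro ⟨h0, h⟩ x hx
      by_cases hh : ∀ k : ℕ, (π ^ k) x ≠ 0
      · exact h x hh hx
      · push Not at hh
        obtain ⟨k, hk⟩ := hh
        have := hx k
        rw [hk] at this
        have : x = 0 := Fin.le_zero_iff.1 this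
        subst this
        exact h0
  rw [Nat.card_congr (Equiv.subtypeEquivRight h)]
  simp only [Nat.card_eq_fintype_card, Fintype.card_subtype]
  rw [← Finset.card_filter_add_card_filter_not (s := Finset.univ.filter (fun π => Oth π 0))
    (fun π => AltAt π 0 0), Finset.filter_filter, Finset.filter_filter, add_comm]
  simp only [and_comm]

/-! ### Numbers -/

def cosC (n : ℕ) : ℤ := if n % 2 = 1 then 0 else (-1) ^ (n / 2)
def sinC (n : ℕ) : ℤ := if n % 2 = 0 then 0 else (-1) ^ (n / 2)

lemma cosC_succ (n : ℕ) : cosC (n+1) = - sinC n := by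
  unfold cosC sinC
  rcases Nat.even_or_odd' n with ⟨k, rfl | rfl⟩
  · simp [show (2*k+1) % 2 = 1 by omega]
  · rw [if_neg (by omega), if_neg (by omega), show (2*k+1+1)/2 = k+1 by omega,
      show (2*k+1)/2 = k by omega, pow_succ]; ring
lemma sinC_succ (n : ℕ) : sinC (n+1) = cosC n := by
  unfold cosC sinC
  rcases Nat.even_or_odd' n with ⟨k, rfl | rfl⟩
  · rw [if_neg (by omega), if_neg (by omega), show (2*k+1)/2 = k by omega,
      show (2*k)/2 = k by omega]
  · rw [if_pos (by omega), if_pos (by omega)]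

def cc : ℕ → ℕ → ℤ
  | a, 0 => cosC a
  | 0, b+1 => - sinC (b+1)
  | _+1, _+1 => 0

lemma cc_id (a b : ℕ) : cc (a+1) b - cc a (b+1) = cc b a := by
  rcases a with _ | a <;> rcases b with _ | b
  · simp [cc, cosC, sinC]
  · simp [cc, sinC_succ (b+1)]
  · simp [cc, cosC_succ (a+1)]
  · simp [cc]

def gZ : ℕ → ℕ → ℤ
  | 0, 0 => cc 0 0
  | a+1, 0 => (a+1) * gZ a 0 + cc (a+1) 0
  | 0, b+1 => (b+1) * gZ 0 b + cc 0 (b+1)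
  | a+1, b+1 => (a+1) * gZ a (b+1) + (b+1) * gZ (a+1) b + cc (a+1) (b+1)
termination_by a b => a + b

lemma gZ_rec (a b : ℕ) : gZ a b = a * gZ (a-1) b + b * gZ a (b-1) + cc a b := by
  rcases a with _ | a <;> rcases b with _ | b <;> rw [gZ] <;> simp

lemma gZ_id (s : ℕ) : ∀ a b : ℕ, a + b = s → gZ (a+1) b - gZ a (b+1) = gZ b a := by
  induction s with
  | zero =>
    intro a b h
    obtain ⟨rfl, rfl⟩ : a = 0 ∧ b = 0 := by omega
    have h1 := gZ_rec 1 0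
    have h2 := gZ_rec 0 1
    have h3 := gZ_rec 0 0
    have := cc_id 0 0
    simp at *
    linarith
  | succ s ih =>
    intro a b h
    have h1 := gZ_rec (a+1) b
    have h2 := gZ_rec a (b+1)
    have h3 := gZ_rec b a
    have h4 := cc_id a b
    have e1 : (a:ℤ) * (gZ a b - gZ (a-1) (b+1)) = a * gZ b (a-1) := by
      rcases a with _ | a
      · simp
      · have := ih a b (by omega)
        simp only [Nat.add_sub_cancel]
        rw [this]
    have e2 : (b:ℤ) * (gZ (a+1) (b-1) - gZ a b) = b * gZ (b-1) a := by
      rcases b with _ | b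
      · simp
      · have := ih a b (by omega)
        simp only [Nat.add_sub_cancel]
        rw [this]
    simp only [Nat.add_sub_cancel] at h1 h2
    push_cast at h1 h2
    linarith

lemma sum_down (n a : ℕ) (h : a ≤ n) :
    gZ 0 n + ∑ c ∈ Finset.range n, (if c < a then gZ (n-1-c) c else 0) = gZ a (n-a) := by
  induction a with
  | zero => simp
  | succ a ih =>
    have e : ∑ c ∈ Finset.range n, (if c < a+1 then gZ (n-1-c) c else 0) =
        ∑ c ∈ Finset.range n, (if c < a then gZ (n-1-c) c else 0) + gZ (n-1-a) a := by
      rw [← Finset.sum_filter, ← Finset.sum_filter]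
      rw [show (Finset.range n).filter (· < a+1) = Finset.range (a+1) by ext; simp; omega,
        show (Finset.range n).filter (· < a) = Finset.range a by ext; simp; omega,
        Finset.sum_range_succ]
    have := ih (by omega)
    have h3 := gZ_id (n-1) a (n-1-a) (by omega)
    rw [show n - 1 - a + 1 = n - a by omega] at h3
    rw [e, show n - (a+1) = n - 1 - a by omega]
    linarith

lemma sum_up (n a : ℕ) (h : a ≤ n) :
    gZ 0 n + ∑ c ∈ Finset.range n, (if a ≤ c then gZ c (n-1-c) else 0) = gZ (n-a) a := by
  rw [← Finset.sum_range_reflect]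
  have := sum_down n (n-a) (by omega)
  rw [show n - (n-a) = a by omega] at this
  rw [← this]
  congr 1
  refine Finset.sum_congr rfl fun c hc => ?_
  have := Finset.mem_range.1 hc
  rw [show n - 1 - (n - 1 - c) = c by omega]
  congr 1
  apply propext
  omega

lemma main_ind (n : ℕ) : (noUDCyclesCount n : ℤ) = gZ 0 n ∧
    (∀ a : Fin n, ∀ b : ℕ, (HH a b : ℤ) =
      if b % 2 = 1 then gZ a (n-1-a) else gZ (n-1-a) a) ∧
    (∀ a : Fin n, (KK a : ℤ) = gZ 0 n + gZ (n-1) 0) := by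
  induction n with
  | zero =>
    refine ⟨?_, fun a => a.elim0, fun a => a.elim0⟩
    have : noUDCyclesCount 0 = 1 := by
      unfold noUDCyclesCount
      rw [Nat.card_eq_one_iff_unique]
      exact ⟨⟨fun x y => Subtype.ext (Subsingleton.elim _ _)⟩, ⟨1, fun x => x.elim0⟩⟩
    rw [this]; simp [gZ, cc, cosC]
  | succ n ih =>
    obtain ⟨ihr, ihH, ihK⟩ := ih
    have hH : ∀ a : Fin (n+1), ∀ b : ℕ, (HH a b : ℤ) =
      if b % 2 = 1 then gZ a (n+1-1-a) else gZ (n+1-1-a) a := by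
      intro a b
      have ha : (a:ℕ) ≤ n := by omega
      rw [HH_rec]
      push_cast
      rw [ihr]
      rcases Nat.mod_two_eq_zero_or_one b with hb | hb
      · rw [if_neg (by omega), ← sum_up n a ha, ← Fin.sum_univ_eq_sum_range
          (fun c => if (a:ℕ) ≤ c then gZ c (n-1-c) else 0)]
        congr 1
        refine Finset.sum_congr rfl fun c _ => ?_
        rw [ihH c (b+1), if_pos (show (b+1) % 2 = 1 by omega)]
        congr 1
        simp [hb, Fin.lt_succAbove_iff_le_castSucc, Fin.le_def]
      · rw [if_pos hb, ← sum_down n a ha, ← Fin.sum_univ_eq_sum_range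
          (fun c => if c < (a:ℕ) then gZ (n-1-c) c else 0)]
        congr 1
        refine Finset.sum_congr rfl fun c _ => ?_
        rw [ihH c (b+1), if_neg (show ¬ (b+1) % 2 = 1 by omega)]
        congr 1
        simp [hb, Fin.succAbove_lt_iff_castSucc_lt]
        exact Fin.lt_def
    have hK : ∀ a : Fin (n+1), (KK a : ℤ) = gZ 0 (n+1) + gZ (n+1-1) 0 := by
      intro a
      rw [KK_rec]
      push_cast
      rw [ihr, Finset.sum_congr rfl (fun c _ => ihK c)]
      have h1 := gZ_rec 0 (n+1)
      have h2 := gZ_rec n 0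
      have h3 : cc 0 (n+1) = - cc n 0 := by simp [cc, sinC_succ]
      simp at *
      linarith
    refine ⟨?_, hH, hK⟩
    have h1 := r_rec n
    have h2 := hK 0
    have h3 := hH 0 0
    simp at h2 h3
    have h4 : (noUDCyclesCount (n+1) : ℤ) + HH (0 : Fin (n+1)) 0 = KK (0 : Fin (n+1)) := by
      exact_mod_cast h1
    linarith

lemma r_div_succ (n : ℕ) : (noUDCyclesCount (n+1) : ℚ) / ((n+1).factorial : ℚ) =
    (noUDCyclesCount n : ℚ) / (n.factorial : ℚ) - (sinC (n+1) : ℚ) / ((n+1).factorial : ℚ) := by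
  have h : (noUDCyclesCount (n+1) : ℤ) = (n+1) * noUDCyclesCount n - sinC (n+1) := by
    rw [(main_ind (n+1)).1, (main_ind n).1, gZ]; simp [cc]; ring
  have h' : (noUDCyclesCount (n+1) : ℚ) = (n+1) * noUDCyclesCount n - sinC (n+1) := by
    exact_mod_cast h
  have hf : (n.factorial : ℚ) ≠ 0 := by positivity
  rw [h', Nat.factorial_succ]
  push_cast
  field_simp

lemma r_even (m : ℕ) : (noUDCyclesCount (2*m+2) : ℚ) / ((2*m+2).factorial : ℚ) =
    (noUDCyclesCount (2*m+1) : ℚ) / ((2*m+1).factorial : ℚ) := by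
  rw [r_div_succ (2*m+1)]
  simp [sinC, show (2*m+1+1) % 2 = 0 by omega]

lemma r_odd (m : ℕ) : (noUDCyclesCount (2*m+1) : ℚ) / ((2*m+1).factorial : ℚ) =
    ∑ i ∈ Finset.Icc 2 (m+1), (-1 : ℚ) ^ i / (Nat.factorial (2 * i - 1) : ℚ) := by
  induction m with
  | zero =>
    rw [r_div_succ]
    have : (noUDCyclesCount 0 : ℤ) = 1 := by rw [(main_ind 0).1]; simp [gZ, cc, cosC]
    have : (noUDCyclesCount 0 : ℚ) = 1 := by exact_mod_cast this
    simp [this, sinC]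
  | succ m ih =>
    rw [Finset.sum_Icc_succ_top (by omega), ← ih, r_div_succ,
      show 2 * (m+1) = 2*m+2 by ring, r_even, show 2 * (m+1+1) - 1 = 2*m+2+1 by omega]
    have : (sinC (2*m+2+1) : ℚ) = (-1)^(m+1) := by
      unfold sinC
      rw [if_neg (by omega), show (2*m+2+1)/2 = m+1 by omega]; simp
    rw [this, pow_succ _ (m+1)]
    ring

/-- for `r n` the number of permutations of `[n]` with no up-down
cycles, `r (2m-1) / (2m-1)! = r (2m) / (2m)! = ∑_{i=2}^{m} (-1)^i / (2i-1)!`. -/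
theorem stmt19 (m : ℕ) (hm : 1 ≤ m) :
    (noUDCyclesCount (2 * m - 1) : ℚ) / (Nat.factorial (2 * m - 1) : ℚ) =
        (noUDCyclesCount (2 * m) : ℚ) / (Nat.factorial (2 * m) : ℚ) ∧
      (noUDCyclesCount (2 * m) : ℚ) / (Nat.factorial (2 * m) : ℚ) =
        ∑ i ∈ Finset.Icc 2 m, (-1 : ℚ) ^ i / (Nat.factorial (2 * i - 1) : ℚ) := by
  obtain ⟨k, rfl⟩ : ∃ k, m = k + 1 := ⟨m - 1, by omega⟩
  rw [show 2 * (k+1) - 1 = 2*k+1 by omega, show 2 * (k+1) = 2*k+2 by ring, r_even]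
  exact ⟨rfl, r_odd k⟩
end
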